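/- Weighted sum of 2^{ω(N)−ω(gcd(N,M))}: Let R, M ∈ ℳ with deg M ≤ deg R, let k be a non-negative integer, and let z be an integer-valued function of R with z ∼ deg R as deg R → ∞. Then, as deg R → ∞, Σ_{N ∈ ℳ, deg N ≤ z, gcd(N,R)=1} (2^{ω(N) − ω(gcd(N,M))}/|N|) · (z − deg N)^k = ((1 − q^{-1})/((k+2)(k+1))) · Π_{P | MR} ((1 − |P|^{-1})/(1 + |P|^{-1})) · Π_{P | M, P ∤ R} (1/(1 − |P|^{-1})) · ( z^{k+2} + O_k(z^{k+1} log(deg R)) ), where the products are over monic prime divisors P. -/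

import Mathlib

open scoped BigOperators
open Filter

noncomputable section

namespace FFEH

variable {Fq : Type} [Field Fq] [Fintype Fq]

open Classical in
/-- The absolute value `|A| = q ^ deg A` of a polynomial `A ∈ 𝔽_q[T]`, with `|0| = 0`. -/
def absP (A : Polynomial Fq) : ℝ :=
  if A = 0 then 0 else (Fintype.card Fq : ℝ) ^ A.natDegree

/-- Monic irreducible ("prime") polynomials. -/
def IsMonicPrime (P : Polynomial Fq) : Prop := P.Monic ∧ Irreducible P

/-- A Dirichlet character of modulus `R` on `𝔽_q[T]`. -/
structure IsDirichletChar (R : Polynomial Fq) (χ : Polynomial Fq → ℂ) : Prop where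
  map_one' : χ 1 = 1
  map_mul' : ∀ A B : Polynomial Fq, χ (A * B) = χ A * χ B
  congr' : ∀ A B : Polynomial Fq, R ∣ A - B → χ A = χ B
  eq_zero_iff' : ∀ A : Polynomial Fq, χ A = 0 ↔ ¬ IsCoprime A R

/-- A primitive Dirichlet character of modulus `R`: one induced by no character of
modulus of strictly smaller degree. -/
def IsPrimitiveChar (R : Polynomial Fq) (χ : Polynomial Fq → ℂ) : Prop :=
  IsDirichletChar R χ ∧
    ∀ S : Polynomial Fq, S.Monic → S ∣ R → S.natDegree < R.natDegree →
      ¬ ∃ χ₁ : Polynomial Fq → ℂ, IsDirichletChar S χ₁ ∧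
        ∀ A : Polynomial Fq, IsCoprime A R → χ A = χ₁ A

/-- An even character: trivial on the nonzero constants. -/
def IsEvenChar (χ : Polynomial Fq → ℂ) : Prop :=
  ∀ a : Fq, a ≠ 0 → χ (Polynomial.C a) = 1

/-- `φ*(R)`: the number of primitive characters of modulus `R`. -/
def numPrimChars (R : Polynomial Fq) : ℕ :=
  Set.ncard {χ : Polynomial Fq → ℂ | IsPrimitiveChar R χ}

/-- The Euler totient `φ(R) = #(𝔽_q[T]/(R))ˣ`. -/
def phiP (R : Polynomial Fq) : ℕ :=
  Nat.card ((Polynomial Fq ⧸ Ideal.span {R})ˣ)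

/-- `ω(A)`: the number of distinct monic prime divisors of `A`. -/
def omegaP (A : Polynomial Fq) : ℕ :=
  Set.ncard {P : Polynomial Fq | IsMonicPrime P ∧ P ∣ A}

open Classical in
/-- The Möbius function on monic polynomials. -/
def muP (A : Polynomial Fq) : ℤ :=
  if Squarefree A then (-1) ^ omegaP A else 0

/-- `d_k(A)`: the number of ways of writing `A` as an ordered product of `k` monic
polynomials. -/
def dk (k : ℕ) (A : Polynomial Fq) : ℕ :=
  Set.ncard {v : Fin k → Polynomial Fq | (∀ i, (v i).Monic) ∧ ∏ i, v i = A}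

/-- `A ∈ 𝒮_ℳ(X)`: `A` is monic and all its prime divisors have degree at most `X`. -/
def SmoothM (X : ℕ) (A : Polynomial Fq) : Prop :=
  A.Monic ∧ ∀ P : Polynomial Fq, IsMonicPrime P → P ∣ A → P.natDegree ≤ X

/-- The Dirichlet `L`-function of a non-trivial character `χ` of modulus `R`:
`L(s,χ) = ∑_{A monic, deg A < deg R} χ(A) |A|^{-s}`. -/
def Lfun (R : Polynomial Fq) (χ : Polynomial Fq → ℂ) (s : ℂ) : ℂ :=
  ∑ᶠ A ∈ {A : Polynomial Fq | A.Monic ∧ A.natDegree < R.natDegree},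
    χ A * (absP A : ℂ) ^ (-s)

open Classical in
/-- The von Mangoldt function: `Λ(A) = log |P|` if `A = P^j` (`P` monic prime, `j ≥ 1`),
and `0` otherwise. -/
def LambdaP (A : Polynomial Fq) : ℝ :=
  if h : ∃ P : Polynomial Fq, (P.Monic ∧ Irreducible P) ∧ ∃ j : ℕ, 1 ≤ j ∧ A = P ^ j
  then Real.log (absP h.choose) else 0

/-- The partial Euler product `P_X(s,χ)`. -/
def PX (X : ℕ) (χ : Polynomial Fq → ℂ) (s : ℂ) : ℂ :=
  Complex.exp (∑ᶠ A ∈ {A : Polynomial Fq | A.Monic ∧ A.natDegree ≤ X},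
    χ A * (LambdaP A : ℂ) / ((absP A : ℂ) ^ s * (Real.log (absP A) : ℂ)))

/-- The `L`-function of `χ` as a polynomial in the variable `w = q^{-s}`. -/
def LPoly (R : Polynomial Fq) (χ : Polynomial Fq → ℂ) : Polynomial ℂ :=
  ∑ n ∈ Finset.range R.natDegree,
    Polynomial.C (∑ᶠ A ∈ {A : Polynomial Fq | A.Monic ∧ A.natDegree = n}, χ A) *
      Polynomial.X ^ n

/-- The sum of `f` over the zeros of `L(s,χ)` counted with multiplicity, including
all the vertical `2π/log q`-periodic repetitions: the zeros are exactly the points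
`-log w / log q + 2πim/log q` for `w` a root (with multiplicity) of the `L`-polynomial
and `m ∈ ℤ`. -/
def zeroSum (R : Polynomial Fq) (χ : Polynomial Fq → ℂ) (f : ℂ → ℂ) : ℂ :=
  ((LPoly R χ).roots.map (fun w => ∑' m : ℤ,
    f (-Complex.log w / (Real.log (Fintype.card Fq) : ℂ) +
        2 * Real.pi * Complex.I * (m : ℂ) / (Real.log (Fintype.card Fq) : ℂ)))).sum

/-- The exponential integral `E₁(y) = ∫_{w=y}^{y+∞} e^{-w}/w dw`, along the horizontal
ray from `y` in the direction of `+1`. -/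
def E1 (y : ℂ) : ℂ :=
  ∫ t : ℝ in Set.Ioi (0 : ℝ), Complex.exp (-(y + (t : ℂ))) / (y + (t : ℂ))

/-- `U(z) = ∫_0^∞ u(x) E₁(z log x) dx`. -/
def Ufun (u : ℝ → ℝ) (z : ℂ) : ℂ :=
  ∫ x : ℝ in Set.Ioi (0 : ℝ), (u x : ℂ) * E1 (z * (Real.log x : ℂ))

/-- The Mellin transform `ũ(s) = ∫_0^∞ x^{s-1} u(x) dx`. -/
def mellinT (u : ℝ → ℝ) (s : ℂ) : ℂ :=
  ∫ x : ℝ in Set.Ioi (0 : ℝ), (x : ℂ) ^ (s - 1) * (u x : ℂ)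

/-- The arithmetic-factor constant `a(k)`. -/
def aConst (Fq : Type) [Field Fq] [Fintype Fq] (k : ℕ) : ℝ :=
  ∏' P : {P : Polynomial Fq // IsMonicPrime P},
    (1 - (absP P.1)⁻¹) ^ (k ^ 2) * ∑' m : ℕ, (dk k (P.1 ^ m) : ℝ) ^ 2 / absP (P.1 ^ m)

/-- The modified partial Euler product `P_X^*(s,χ)`. -/
def PXstar (X : ℕ) (χ : Polynomial Fq → ℂ) (s : ℂ) : ℂ :=
  (∏ᶠ P ∈ {P : Polynomial Fq | IsMonicPrime P ∧ P.natDegree ≤ X},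
      (1 - χ P / (absP P : ℂ) ^ s)⁻¹) *
    ∏ᶠ P ∈ {P : Polynomial Fq | IsMonicPrime P ∧ X < 2 * P.natDegree ∧ P.natDegree ≤ X},
      (1 + χ P ^ 2 / (2 * (absP P : ℂ) ^ (2 * s)))⁻¹

open Classical in
/-- The multiplicity of `P` in `A` (for `A ≠ 0`). -/
def multP (P A : Polynomial Fq) : ℕ :=
  if A = 0 then 0 else Nat.findGreatest (fun e => P ^ e ∣ A) A.natDegree

/-- Local coefficients of the Dirichlet series of `P_X^*(s,χ)^k`. -/
def locAlpha (k X : ℕ) (P : Polynomial Fq) (m : ℕ) : ℝ :=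
  if m = 0 then 1
  else if X < P.natDegree then 0
  else if 2 * P.natDegree ≤ X then (dk k (P ^ m) : ℝ)
  else ∑ j ∈ Finset.range (m / 2 + 1),
    (dk k (P ^ (m - 2 * j)) : ℝ) * (dk k (P ^ j) : ℝ) * (-(2 : ℝ)⁻¹) ^ j

/-- `α_k(A)`: the coefficients of the Dirichlet series `P_X^*(s,χ)^k = ∑ α_k(A)χ(A)|A|^{-s}`. -/
def alphaK (k X : ℕ) (A : Polynomial Fq) : ℝ :=
  ∏ᶠ P ∈ {P : Polynomial Fq | IsMonicPrime P ∧ P ∣ A}, locAlpha k X P (multP P A)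

/-- Local coefficients of the Dirichlet series of `P_X^*(s,χ)^{-1}`. -/
def locAlphaNeg (X : ℕ) (P : Polynomial Fq) (m : ℕ) : ℝ :=
  if m = 0 then 1
  else if X < P.natDegree then 0
  else if m = 1 then -1
  else if m = 2 then (if 2 * P.natDegree ≤ X then 0 else 2⁻¹)
  else if m = 3 then (if 2 * P.natDegree ≤ X then 0 else -2⁻¹)
  else 0

/-- The multiplicative function `α_{-1}`. -/
def alphaNeg (X : ℕ) (A : Polynomial Fq) : ℝ :=
  ∏ᶠ P ∈ {P : Polynomial Fq | IsMonicPrime P ∧ P ∣ A}, locAlphaNeg X P (multP P A)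

/-- The cosine integral `Ci(y) = -∫_y^∞ cos t / t dt`. -/
def Ci (y : ℝ) : ℝ := -∫ t : ℝ in Set.Ioi y, Real.cos t / t

open Classical in
/-- The greatest common monic divisor of two polynomials. -/
def gcdP (A B : Polynomial Fq) : Polynomial Fq :=
  Polynomial.C ((EuclideanDomain.gcd A B).leadingCoeff)⁻¹ * EuclideanDomain.gcd A B

/-- The decomposition shape of Lemma `A₁A₂A₃ = B₁B₂B₃`: all factors monic, the
coprimality conditions `gcd(V_{i,j}, V_{k,l}) = 1` for `i ≠ k` and `j ≠ l`, and the six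
product equations. -/
def Decomp3 (A1 A2 A3 B1 B2 B3 G1 G2 G3 V12 V13 V21 V23 V31 V32 : Polynomial Fq) : Prop :=
  G1.Monic ∧ G2.Monic ∧ G3.Monic ∧ V12.Monic ∧ V13.Monic ∧ V21.Monic ∧
    V23.Monic ∧ V31.Monic ∧ V32.Monic ∧
  IsCoprime V12 V21 ∧ IsCoprime V12 V23 ∧ IsCoprime V12 V31 ∧
  IsCoprime V13 V21 ∧ IsCoprime V13 V31 ∧ IsCoprime V13 V32 ∧
  IsCoprime V21 V32 ∧ IsCoprime V23 V31 ∧ IsCoprime V23 V32 ∧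
  A1 = G1 * V12 * V13 ∧ B1 = G1 * V21 * V31 ∧
  A2 = G2 * V21 * V23 ∧ B2 = G2 * V12 * V32 ∧
  A3 = G3 * V31 * V32 ∧ B3 = G3 * V13 * V23

set_option linter.unusedSectionVars false
/-! ### Part A: generating functions -/

section PartA
open Classical
open Polynomial (X C)

lemma monics_finite (n : ℕ) : {N : Polynomial Fq | N.Monic ∧ N.natDegree = n}.Finite := by
  have e := (Polynomial.monicEquivDegreeLT (R := Fq) n).trans (Polynomial.degreeLTEquiv Fq n).toEquiv
  have : Finite {p : Polynomial Fq // p.Monic ∧ p.natDegree = n} := Finite.of_equiv _ e.symm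
  exact Set.finite_coe_iff.1 this

/-- Monic polynomials of degree `n`. -/
def monics (Fq : Type) [Field Fq] [Fintype Fq] (n : ℕ) : Finset (Polynomial Fq) :=
  (monics_finite (Fq := Fq) n).toFinset

lemma mem_monics {n : ℕ} {N : Polynomial Fq} : N ∈ monics Fq n ↔ N.Monic ∧ N.natDegree = n := by
  simp [monics]

lemma card_monics (n : ℕ) : (monics Fq n).card = (Fintype.card Fq) ^ n := by
  have e := (Polynomial.monicEquivDegreeLT (R := Fq) n).trans (Polynomial.degreeLTEquiv Fq n).toEquiv
  have h1 : Nat.card {p : Polynomial Fq // p.Monic ∧ p.natDegree = n} = (Fintype.card Fq) ^ n := by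
    rw [Nat.card_congr e]; simp
  rw [← h1, ← Nat.card_eq_finsetCard]
  apply Nat.card_congr
  exact Equiv.subtypeEquivRight (fun x => mem_monics)

/-- Monic prime divisors. -/
def pf (N : Polynomial Fq) : Finset (Polynomial Fq) :=
  ((Finset.range (N.natDegree + 1)).biUnion (monics Fq)).filter (fun P => IsMonicPrime P ∧ P ∣ N)

lemma mem_pf {N P : Polynomial Fq} (hN : N ≠ 0) : P ∈ pf N ↔ IsMonicPrime P ∧ P ∣ N := by
  simp only [pf, Finset.mem_filter, Finset.mem_biUnion, Finset.mem_range, mem_monics]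
  constructor
  · exact fun h => h.2
  · intro h
    exact ⟨⟨P.natDegree, Nat.lt_succ_of_le (Polynomial.natDegree_le_of_dvd h.2 hN), h.1.1, rfl⟩, h⟩

lemma prime_dvd_iff_eq {P Q : Polynomial Fq} (hP : IsMonicPrime P) (hQ : IsMonicPrime Q)
    (h : P ∣ Q) : P = Q :=
  Polynomial.eq_of_monic_of_associated hP.1 hQ.1 (hP.2.associated_of_dvd hQ.2 h)

lemma pf_mul {P N : Polynomial Fq} (hP : IsMonicPrime P) (hN : N.Monic) :
    pf (P * N) = insert P (pf N) := by
  ext Q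
  rw [mem_pf (hP.1.mul hN).ne_zero, Finset.mem_insert, mem_pf hN.ne_zero]
  constructor
  · rintro ⟨hQ, hd⟩
    rcases hQ.2.prime.dvd_or_dvd hd with h | h
    · exact Or.inl (prime_dvd_iff_eq hQ hP h)
    · exact Or.inr ⟨hQ, h⟩
  · rintro (rfl | h)
    · exact ⟨hP, dvd_mul_right _ _⟩
    · exact ⟨h.1, h.2.mul_left _⟩

/-- The multiplicative weight. -/
def wt (τ : Polynomial Fq → ℝ) (N : Polynomial Fq) : ℝ := ∏ P ∈ pf N, τ P

/-- generating function -/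
def gf (f : Polynomial Fq → ℝ) : PowerSeries ℝ :=
  PowerSeries.mk (fun n => ∑ N ∈ monics Fq n, f N)

lemma gf_split {P : Polynomial Fq} (hP : IsMonicPrime P) (f : Polynomial Fq → ℝ) :
    gf f = gf (fun N => if P ∣ N then 0 else f N) +
      (PowerSeries.X ^ P.natDegree) * gf (fun N => f (P * N)) := by
  ext n
  simp only [gf, map_add, PowerSeries.coeff_mk, PowerSeries.coeff_X_pow_mul']
  have h1 : ∑ N ∈ monics Fq n, f N = ∑ N ∈ monics Fq n, (if P ∣ N then 0 else f N) +
      ∑ N ∈ (monics Fq n).filter (fun N => P ∣ N), f N := by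
    rw [Finset.sum_filter, ← Finset.sum_add_distrib]
    apply Finset.sum_congr rfl
    intro N _
    split_ifs <;> simp
  rw [h1]
  congr 1
  split_ifs with hd
  · symm
    apply Finset.sum_bij (fun N _ => P * N)
    · intro N hN
      rw [mem_monics] at hN
      rw [Finset.mem_filter, mem_monics]
      refine ⟨⟨hP.1.mul hN.1, ?_⟩, dvd_mul_right _ _⟩
      rw [hP.1.natDegree_mul hN.1, hN.2]; omega
    · intro a _ b _ h
      exact mul_left_cancel₀ hP.1.ne_zero h
    · intro b hb
      rw [Finset.mem_filter, mem_monics] at hb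
      obtain ⟨⟨hb1, hb2⟩, c, rfl⟩ := hb
      have hc := hP.1.of_mul_monic_left hb1
      refine ⟨c, ?_, rfl⟩
      rw [mem_monics]
      refine ⟨hc, ?_⟩
      rw [hP.1.natDegree_mul hc] at hb2; omega
    · intros; rfl
  · apply Finset.sum_eq_zero
    intro N hN
    rw [Finset.mem_filter, mem_monics] at hN
    exact absurd (Polynomial.natDegree_le_of_dvd hN.2 hN.1.1.ne_zero) (by omega)

lemma gf_congr {f g : Polynomial Fq → ℝ} (h : ∀ N, N.Monic → f N = g N) : gf f = gf g := by
  ext n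
  simp only [gf, PowerSeries.coeff_mk]
  exact Finset.sum_congr rfl (fun N hN => h N (mem_monics.1 hN).1)

lemma gf_smul (c : ℝ) (f : Polynomial Fq → ℝ) : gf (fun N => c * f N) = PowerSeries.C c * gf f := by
  ext n
  simp [gf, Finset.mul_sum]

lemma wt_update_zero {P : Polynomial Fq} (hP : IsMonicPrime P) (τ : Polynomial Fq → ℝ)
    {N : Polynomial Fq} (hN : N.Monic) (a : ℝ) :
    (if P ∣ N then 0 else wt (Function.update τ P a) N) = wt (Function.update τ P 0) N := by
  unfold wt
  split_ifs with h
  · symm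
    exact Finset.prod_eq_zero ((mem_pf hN.ne_zero).2 ⟨hP, h⟩) (by simp)
  · apply Finset.prod_congr rfl
    intro Q hQ
    rw [mem_pf hN.ne_zero] at hQ
    have : Q ≠ P := by rintro rfl; exact h hQ.2
    simp [this]

lemma wt_update_mul {P : Polynomial Fq} (hP : IsMonicPrime P) (τ : Polynomial Fq → ℝ)
    {N : Polynomial Fq} (hN : N.Monic) (a : ℝ) :
    wt (Function.update τ P a) (P * N) = a * wt (Function.update τ P 1) N := by
  unfold wt
  rw [pf_mul hP hN]
  have h1 : insert P (pf N) = insert P ((pf N).erase P) := by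
    ext Q; by_cases h : Q = P <;> simp [h]
  rw [h1, Finset.prod_insert (by simp)]
  have h2 : ∏ Q ∈ pf N, Function.update τ P 1 Q = ∏ Q ∈ (pf N).erase P, Function.update τ P 1 Q := by
    symm
    apply Finset.prod_subset (Finset.erase_subset _ _)
    intro x hx hx'
    have : x = P := by by_contra hne; exact hx' (Finset.mem_erase.2 ⟨hne, hx⟩)
    subst this; simp
  rw [h2]
  simp only [Function.update_self]
  congr 1
  apply Finset.prod_congr rfl
  intro Q hQ
  have := (Finset.mem_erase.1 hQ).1
  simp [this]

lemma gf_step {P : Polynomial Fq} (hP : IsMonicPrime P) (τ : Polynomial Fq → ℝ) :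
    (1 - PowerSeries.X ^ P.natDegree) * gf (wt τ) =
      (1 + PowerSeries.C (τ P - 1) * PowerSeries.X ^ P.natDegree) *
        gf (wt (Function.update τ P 0)) := by
  have key : ∀ a : ℝ, gf (wt (Function.update τ P a)) = gf (wt (Function.update τ P 0)) +
      PowerSeries.C a * PowerSeries.X ^ P.natDegree * gf (wt (Function.update τ P 1)) := by
    intro a
    rw [gf_split hP (wt (Function.update τ P a)), gf_congr (fun N hN => wt_update_zero hP τ hN a),
      gf_congr (fun N hN => wt_update_mul hP τ hN a), gf_smul]
    ring
  have h1 := key 1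
  have h2 := key (τ P)
  rw [Function.update_eq_self] at h2
  rw [map_one] at h1
  rw [map_sub, map_one]
  linear_combination (1 - PowerSeries.X ^ P.natDegree) * h2 +
    PowerSeries.C (τ P) * PowerSeries.X ^ P.natDegree * h1

/-- `τ` set to zero on `S`. -/
def zeroOn (S : Finset (Polynomial Fq)) (τ : Polynomial Fq → ℝ) : Polynomial Fq → ℝ :=
  fun P => if P ∈ S then 0 else τ P

lemma gf_steps (S : Finset (Polynomial Fq)) (hS : ∀ P ∈ S, IsMonicPrime P)
    (τ : Polynomial Fq → ℝ) :
    (∏ P ∈ S, (1 - PowerSeries.X ^ P.natDegree)) * gf (wt τ) =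
      (∏ P ∈ S, (1 + PowerSeries.C (τ P - 1) * PowerSeries.X ^ P.natDegree)) *
        gf (wt (zeroOn S τ)) := by
  induction S using Finset.induction_on with
  | empty => simp; congr 1
  | insert P S hPS ih =>
    have ih := ih (fun Q hQ => hS Q (Finset.mem_insert_of_mem hQ))
    have h := gf_step (hS P (Finset.mem_insert_self _ _)) (zeroOn S τ)
    have e1 : Function.update (zeroOn S τ) P 0 = zeroOn (insert P S) τ := by
      funext Q
      by_cases hQ : Q = P
      · subst hQ; simp [zeroOn]
      · simp [zeroOn, hQ]
    have e2 : zeroOn S τ P = τ P := by simp [zeroOn, hPS]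
    rw [e1, e2] at h
    rw [Finset.prod_insert hPS, Finset.prod_insert hPS, mul_assoc, ih]
    linear_combination (∏ P ∈ S, (1 + PowerSeries.C (τ P - 1) * PowerSeries.X ^ P.natDegree)) * h

lemma natDegree_pos_of_prime {P : Polynomial Fq} (hP : IsMonicPrime P) : 1 ≤ P.natDegree :=
  hP.2.natDegree_pos

lemma one_sub_X_pow_ne_zero {d : ℕ} (hd : 1 ≤ d) : (1 - PowerSeries.X ^ d : PowerSeries ℝ) ≠ 0 := by
  intro h
  have := congrArg (PowerSeries.coeff 0) h
  rw [map_sub, PowerSeries.coeff_X_pow, if_neg (by omega)] at this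
  simp at this

lemma gf_ratio (S : Finset (Polynomial Fq)) (hS : ∀ P ∈ S, IsMonicPrime P)
    (τ : Polynomial Fq → ℝ) (hτ : ∀ P, P ∉ S → τ P = 2) :
    (∏ P ∈ S, (1 + PowerSeries.X ^ P.natDegree)) * gf (wt τ) =
      (∏ P ∈ S, (1 + PowerSeries.C (τ P - 1) * PowerSeries.X ^ P.natDegree)) *
        gf (wt (Fq := Fq) (fun _ => 2)) := by
  have h1 := gf_steps S hS τ
  have h2 := gf_steps S hS (fun _ => 2)
  have e : zeroOn S τ = zeroOn S (fun _ => 2) := by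
    funext P
    by_cases h : P ∈ S <;> simp [zeroOn, h, hτ]
  rw [e] at h1
  norm_num at h2
  apply mul_left_cancel₀ (a := ∏ P ∈ S, (1 - PowerSeries.X ^ P.natDegree : PowerSeries ℝ))
  · rw [Finset.prod_ne_zero_iff]
    exact fun P hP => one_sub_X_pow_ne_zero (natDegree_pos_of_prime (hS P hP))
  · linear_combination (∏ P ∈ S, (1 + PowerSeries.X ^ P.natDegree)) * h1 -
      (∏ P ∈ S, (1 + PowerSeries.C (τ P - 1) * PowerSeries.X ^ P.natDegree)) * h2

lemma exists_prime_dvd {N : Polynomial Fq} (hd : 1 ≤ N.natDegree) :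
    ∃ P, IsMonicPrime P ∧ P ∣ N := by
  have hu : ¬ IsUnit N := by
    intro h; have := Polynomial.natDegree_eq_zero_of_isUnit h; omega
  obtain ⟨g, hm, hi, hdv⟩ := Polynomial.exists_monic_irreducible_factor N hu
  exact ⟨g, ⟨hm, hi⟩, hdv⟩

lemma gf_all_one : (1 - PowerSeries.C (Fintype.card Fq : ℝ) * PowerSeries.X) *
    gf (wt (Fq := Fq) (fun _ => 1)) = 1 := by
  ext n
  have h : ∀ n, PowerSeries.coeff n (gf (wt (Fq := Fq) (fun _ => 1))) = (Fintype.card Fq : ℝ) ^ n := by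
    intro n
    simp [gf, wt, card_monics]
  rw [sub_mul, map_sub, one_mul, mul_assoc, PowerSeries.coeff_C_mul, h]
  cases n with
  | zero => simp
  | succ n =>
    rw [PowerSeries.coeff_succ_X_mul, h]
    simp [PowerSeries.coeff_one]; ring

/-- all monic primes of degree at most `n` -/
def primesLE (Fq : Type) [Field Fq] [Fintype Fq] (n : ℕ) : Finset (Polynomial Fq) :=
  ((Finset.range (n + 1)).biUnion (monics Fq)).filter (fun P => IsMonicPrime P)

lemma mem_primesLE {n : ℕ} {P : Polynomial Fq} :
    P ∈ primesLE Fq n ↔ IsMonicPrime P ∧ P.natDegree ≤ n := by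
  simp only [primesLE, Finset.mem_filter, Finset.mem_biUnion, Finset.mem_range, mem_monics]
  constructor
  · rintro ⟨⟨m, h1, h2, h3⟩, h4⟩; exact ⟨h4, by omega⟩
  · rintro ⟨h1, h2⟩; exact ⟨⟨P.natDegree, by omega, h1.1, rfl⟩, h1⟩

lemma gf_zeroOn_primesLE (n : ℕ) (τ : Polynomial Fq → ℝ) :
    (PowerSeries.X ^ (n + 1) : PowerSeries ℝ) ∣ gf (wt (zeroOn (primesLE Fq n) τ)) - 1 := by
  rw [PowerSeries.X_pow_dvd_iff]
  intro m hm
  rw [map_sub, sub_eq_zero]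
  simp only [gf, PowerSeries.coeff_mk, PowerSeries.coeff_one]
  split_ifs with h0
  · subst h0
    have : monics Fq 0 = {1} := by
      ext N; rw [mem_monics, Finset.mem_singleton]
      constructor
      · rintro ⟨h1, h2⟩; exact Polynomial.eq_one_of_monic_natDegree_zero h1 h2
      · rintro rfl; simp
    rw [this, Finset.sum_singleton]
    have : pf (1 : Polynomial Fq) = ∅ := by
      ext P; rw [mem_pf one_ne_zero]
      simp only [Finset.notMem_empty, iff_false]
      rintro ⟨h1, h2⟩; exact h1.2.not_isUnit (isUnit_of_dvd_one h2)
    simp [wt, this]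
  · apply Finset.sum_eq_zero
    intro N hN
    rw [mem_monics] at hN
    obtain ⟨P, hP, hd⟩ := exists_prime_dvd (N := N) (by omega)
    apply Finset.prod_eq_zero ((mem_pf hN.1.ne_zero).2 ⟨hP, hd⟩)
    have : P ∈ primesLE Fq n := mem_primesLE.2 ⟨hP, by
      have := Polynomial.natDegree_le_of_dvd hd hN.1.ne_zero; omega⟩
    simp [zeroOn, this]

lemma eq_of_forall_X_pow_dvd {A B : PowerSeries ℝ}
    (h : ∀ n : ℕ, (PowerSeries.X ^ (n + 1) : PowerSeries ℝ) ∣ A - B) : A = B := by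
  ext n
  have := PowerSeries.X_pow_dvd_iff.1 (h n) n (Nat.lt_succ_self n)
  rwa [map_sub, sub_eq_zero] at this

lemma gf_two : (1 - PowerSeries.C (Fintype.card Fq : ℝ) * PowerSeries.X) ^ 2 *
    gf (wt (Fq := Fq) (fun _ => 2)) = 1 - PowerSeries.C (Fintype.card Fq : ℝ) * PowerSeries.X ^ 2 := by
  apply eq_of_forall_X_pow_dvd
  intro n
  set q : ℝ := (Fintype.card Fq : ℝ) with hq
  set S := primesLE Fq n with hSdef
  have hS : ∀ P ∈ S, IsMonicPrime P := fun P hP => (mem_primesLE.1 hP).1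
  have h1 := gf_steps S hS (fun _ => 1)
  have h2 := gf_steps S hS (fun _ => 2)
  simp only [sub_self, map_zero, zero_mul, add_zero, Finset.prod_const_one, one_mul] at h1
  norm_num at h2
  obtain ⟨U, hU⟩ := gf_zeroOn_primesLE (Fq := Fq) n (fun _ => 1)
  obtain ⟨V, hV⟩ := gf_zeroOn_primesLE (Fq := Fq) n (fun _ => 2)
  rw [← hSdef] at hU hV
  have h0 := gf_all_one (Fq := Fq)
  rw [← hq] at h0
  set Pm : PowerSeries ℝ := ∏ P ∈ S, (1 - PowerSeries.X ^ P.natDegree) with hPm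
  set Pp : PowerSeries ℝ := ∏ P ∈ S, (1 + PowerSeries.X ^ P.natDegree) with hPp
  -- `Pm ≡ 1 - qX`
  have hm : Pm - (1 - PowerSeries.C q * PowerSeries.X) =
      PowerSeries.X ^ (n + 1) * (U * (1 - PowerSeries.C q * PowerSeries.X)) := by
    linear_combination (1 - PowerSeries.C q * PowerSeries.X) * h1 - Pm * h0 +
      (1 - PowerSeries.C q * PowerSeries.X) * hU
  -- polynomial version
  have hpoly : (Polynomial.X ^ (n + 1) : Polynomial ℝ) ∣
      (∏ P ∈ S, (1 - Polynomial.X ^ P.natDegree)) - (1 - Polynomial.C q * Polynomial.X) := by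
    rw [Polynomial.X_pow_dvd_iff]
    intro d hd
    have : (PowerSeries.X ^ (n + 1) : PowerSeries ℝ) ∣
      Pm - (1 - PowerSeries.C q * PowerSeries.X) := ⟨_, hm⟩
    have := PowerSeries.X_pow_dvd_iff.1 this d hd
    rw [← this, ← Polynomial.coeff_coe]
    congr 1
    have hc : ((∏ P ∈ S, (1 - Polynomial.X ^ P.natDegree) : Polynomial ℝ) : PowerSeries ℝ) = Pm := by
      rw [hPm, ← Polynomial.coeToPowerSeries.ringHom_apply, map_prod]
      simp
    rw [Polynomial.coe_sub, hc]
    simp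
  have hexp := map_dvd (Polynomial.expand ℝ 2) hpoly
  simp only [map_pow, Polynomial.expand_X, map_sub, map_prod, map_one, map_mul,
    Polynomial.expand_C] at hexp
  have hexp2 := map_dvd (Polynomial.coeToPowerSeries.ringHom (R := ℝ)) hexp
  simp only [map_pow, map_sub, map_prod, map_one, map_mul,
    Polynomial.coeToPowerSeries.ringHom_apply, Polynomial.coe_X, Polynomial.coe_C] at hexp2
  have hpm : Pm * Pp = ∏ P ∈ S, (1 - (PowerSeries.X ^ 2) ^ P.natDegree : PowerSeries ℝ) := by
    rw [hPm, hPp, ← Finset.prod_mul_distrib]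
    apply Finset.prod_congr rfl
    intros; ring
  rw [← hpm] at hexp2
  have hexp3 : (PowerSeries.X ^ (n + 1) : PowerSeries ℝ) ∣
      Pm * Pp - (1 - PowerSeries.C q * PowerSeries.X ^ 2) := by
    refine dvd_trans ?_ hexp2
    rw [← pow_mul]
    exact pow_dvd_pow _ (by omega)
  obtain ⟨W, hW⟩ := hexp3
  set G := gf (wt (Fq := Fq) (fun _ => 2))
  set E := gf (wt (zeroOn S (fun _ : Polynomial Fq => (2:ℝ))))
  -- `Pm² G = Pm Pp E`
  refine ⟨W + Pm * Pp * V - U * (1 - PowerSeries.C q * PowerSeries.X) *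
    (Pm + (1 - PowerSeries.C q * PowerSeries.X)) * G, ?_⟩
  linear_combination Pm * h2 + Pm * Pp * hV + hW -
    (Pm + (1 - PowerSeries.C q * PowerSeries.X)) * G * hm

lemma prime_count (S : Finset (Polynomial Fq)) (hS : ∀ P ∈ S, IsMonicPrime P) (e : ℕ) :
    e * (S.filter (fun P => P.natDegree = e)).card ≤ (Fintype.card Fq) ^ e := by
  rcases Nat.eq_zero_or_pos e with rfl | he
  · simp
  have hq : 1 < Nat.card Fq := Finite.one_lt_card
  have hdvd : ∏ P ∈ S.filter (fun P => P.natDegree = e), P ∣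
      (Polynomial.X ^ (Nat.card Fq) ^ e - Polynomial.X : Polynomial Fq) := by
    apply Finset.prod_dvd_of_coprime
    · intro P hP Q hQ hne
      rw [Finset.mem_coe, Finset.mem_filter] at hP hQ
      show IsCoprime P Q
      rw [(hS P hP.1).2.coprime_iff_not_dvd]
      intro h
      exact hne (prime_dvd_iff_eq (hS P hP.1) (hS Q hQ.1) h)
    · intro P hP
      rw [Finset.mem_filter] at hP
      apply ((hS P hP.1).2.natDegree_dvd_iff_dvd_X_pow_card_pow_sub_X).1
      rw [hP.2]
  have hne : (Polynomial.X ^ (Nat.card Fq) ^ e - Polynomial.X : Polynomial Fq) ≠ 0 :=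
    FiniteField.X_pow_card_pow_sub_X_ne_zero _ he.ne' hq
  have h := Polynomial.natDegree_le_of_dvd hdvd hne
  rw [FiniteField.X_pow_card_pow_sub_X_natDegree_eq _ he.ne' hq,
    Polynomial.natDegree_prod_of_monic _ _ (fun P hP => (hS P (Finset.mem_filter.1 hP).1).1),
    Finset.sum_congr rfl (fun P hP => (Finset.mem_filter.1 hP).2), Finset.sum_const,
    smul_eq_mul, Nat.card_eq_fintype_card] at h
  rwa [mul_comm]

lemma sum_deg_pf {N : Polynomial Fq} (hN : N ≠ 0) : ∑ P ∈ pf N, P.natDegree ≤ N.natDegree := by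
  have hdvd : ∏ P ∈ pf N, P ∣ N := by
    apply Finset.prod_dvd_of_coprime
    · intro P hP Q hQ hne
      rw [Finset.mem_coe, mem_pf hN] at hP hQ
      show IsCoprime P Q
      rw [hP.1.2.coprime_iff_not_dvd]
      intro h
      exact hne (prime_dvd_iff_eq hP.1 hQ.1 h)
    · intro P hP
      exact ((mem_pf hN).1 hP).2
  have h := Polynomial.natDegree_le_of_dvd hdvd hN
  rwa [Polynomial.natDegree_prod_of_monic _ _ (fun P hP => ((mem_pf hN).1 hP).1.1)] at h

end PartA
section PartB

lemma hasSum_of_eq {f g : ℕ → ℂ} {a : ℂ} (h : HasSum f a) (e : ∀ n, g n = f n) : HasSum g a := by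
  have : g = f := funext e
  rwa [this]

/-- Power series with controlled weighted `ℓ¹` norm and known sum. -/
def Good (r : ℝ) (A : PowerSeries ℝ) (N : ℝ) (φ : ℂ → ℂ) : Prop :=
  Summable (fun n => |PowerSeries.coeff n A| * r ^ n) ∧
  (∑' n, |PowerSeries.coeff n A| * r ^ n) ≤ N ∧
  ∀ v : ℂ, ‖v‖ ≤ r → HasSum (fun n => ((PowerSeries.coeff n A : ℝ) : ℂ) * v ^ n) (φ v)

lemma Good.mul {r : ℝ} (hr : 0 ≤ r) {A B : PowerSeries ℝ} {N N' : ℝ} {φ ψ : ℂ → ℂ}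
    (hA : Good r A N φ) (hB : Good r B N' ψ) :
    Good r (A * B) (N * N') (fun v => φ v * ψ v) := by
  obtain ⟨a1, a2, a3⟩ := hA
  obtain ⟨b1, b2, b3⟩ := hB
  have an : ∀ n, 0 ≤ |PowerSeries.coeff n A| * r ^ n := fun n => by positivity
  have bn : ∀ n, 0 ≤ |PowerSeries.coeff n B| * r ^ n := fun n => by positivity
  have hle : ∀ n, |PowerSeries.coeff n (A * B)| * r ^ n ≤
      ∑ kl ∈ Finset.HasAntidiagonal.antidiagonal n, (|PowerSeries.coeff kl.1 A| * r ^ kl.1) *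
        (|PowerSeries.coeff kl.2 B| * r ^ kl.2) := by
    intro n
    rw [PowerSeries.coeff_mul]
    calc |∑ p ∈ Finset.HasAntidiagonal.antidiagonal n, PowerSeries.coeff p.1 A * PowerSeries.coeff p.2 B| * r ^ n
        ≤ (∑ p ∈ Finset.HasAntidiagonal.antidiagonal n, |PowerSeries.coeff p.1 A * PowerSeries.coeff p.2 B|) * r ^ n := by
          gcongr; exact Finset.abs_sum_le_sum_abs _ _
      _ = _ := by
          rw [Finset.sum_mul]
          apply Finset.sum_congr rfl
          intro p hp
          rw [← Finset.HasAntidiagonal.mem_antidiagonal.1 hp, pow_add, abs_mul]; ring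
  have an' : Summable (fun n => ‖|PowerSeries.coeff n A| * r ^ n‖) := by
    simpa only [Real.norm_of_nonneg (an _)] using a1
  have bn' : Summable (fun n => ‖|PowerSeries.coeff n B| * r ^ n‖) := by
    simpa only [Real.norm_of_nonneg (bn _)] using b1
  have hs := (summable_norm_sum_mul_antidiagonal_of_summable_norm an' bn').of_norm
  have hsum : Summable (fun n => |PowerSeries.coeff n (A * B)| * r ^ n) :=
    Summable.of_nonneg_of_le (fun n => by positivity) hle hs
  refine ⟨hsum, ?_, ?_⟩
  · calc _ ≤ _ := hsum.tsum_le_tsum hle hs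
      _ = _ := (tsum_mul_tsum_eq_tsum_sum_antidiagonal_of_summable_norm an' bn').symm
      _ ≤ N * N' := by
        apply mul_le_mul a2 b2 (tsum_nonneg bn) (le_trans (tsum_nonneg an) a2)
  · intro v hv
    have hav : Summable (fun n => ‖((PowerSeries.coeff n A : ℝ) : ℂ) * v ^ n‖) := by
      refine Summable.of_nonneg_of_le (fun n => norm_nonneg _) (fun n => ?_) a1
      rw [norm_mul, norm_pow, Complex.norm_real, Real.norm_eq_abs]
      gcongr
    have hbv : Summable (fun n => ‖((PowerSeries.coeff n B : ℝ) : ℂ) * v ^ n‖) := by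
      refine Summable.of_nonneg_of_le (fun n => norm_nonneg _) (fun n => ?_) b1
      rw [norm_mul, norm_pow, Complex.norm_real, Real.norm_eq_abs]
      gcongr
    have h1 := (summable_norm_sum_mul_antidiagonal_of_summable_norm hav hbv).of_norm.hasSum
    rw [← tsum_mul_tsum_eq_tsum_sum_antidiagonal_of_summable_norm hav hbv, (a3 v hv).tsum_eq,
      (b3 v hv).tsum_eq] at h1
    refine hasSum_of_eq h1 (fun n => ?_)
    rw [PowerSeries.coeff_mul]
    push_cast
    rw [Finset.sum_mul]
    apply Finset.sum_congr rfl
    intro p hp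
    rw [← Finset.HasAntidiagonal.mem_antidiagonal.1 hp, pow_add]; ring

lemma Good.add {r : ℝ} (hr : 0 ≤ r) {A B : PowerSeries ℝ} {N N' : ℝ} {φ ψ : ℂ → ℂ}
    (hA : Good r A N φ) (hB : Good r B N' ψ) :
    Good r (A + B) (N + N') (fun v => φ v + ψ v) := by
  obtain ⟨a1, a2, a3⟩ := hA
  obtain ⟨b1, b2, b3⟩ := hB
  have hle : ∀ n, |PowerSeries.coeff n (A + B)| * r ^ n ≤
      |PowerSeries.coeff n A| * r ^ n + |PowerSeries.coeff n B| * r ^ n := by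
    intro n
    rw [map_add, ← add_mul]
    gcongr
    exact abs_add_le _ _
  have hsum : Summable (fun n => |PowerSeries.coeff n (A + B)| * r ^ n) :=
    Summable.of_nonneg_of_le (fun n => by positivity) hle (a1.add b1)
  refine ⟨hsum, ?_, ?_⟩
  · calc _ ≤ _ := hsum.tsum_le_tsum hle (a1.add b1)
      _ = _ := a1.tsum_add b1
      _ ≤ _ := add_le_add a2 b2
  · intro v hv
    convert (a3 v hv).add (b3 v hv) using 2 with n
    rw [map_add]; push_cast; ring

lemma Good.monomial {r : ℝ} (s : ℝ) (d : ℕ) :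
    Good r (PowerSeries.C s * PowerSeries.X ^ d) (|s| * r ^ d) (fun v => s * v ^ d) := by
  have hc : ∀ n, PowerSeries.coeff n (PowerSeries.C s * PowerSeries.X ^ d : PowerSeries ℝ) =
      if n = d then s else 0 := by
    intro n; rw [PowerSeries.coeff_C_mul, PowerSeries.coeff_X_pow]; simp
  have h1 : HasSum (fun n => |PowerSeries.coeff n (PowerSeries.C s * PowerSeries.X ^ d : PowerSeries ℝ)| * r ^ n)
      (|s| * r ^ d) := by
    convert hasSum_single d _ using 1
    · rw [hc]; simp
    · intro n hn; rw [hc]; simp [hn]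
  refine ⟨h1.summable, h1.tsum_eq.le, ?_⟩
  intro v _
  convert hasSum_single d _ using 1
  · rw [hc]; simp
  · intro n hn; rw [hc]; simp [hn]

lemma Good.binom {r : ℝ} (hr : 0 ≤ r) (s : ℝ) (d : ℕ) :
    Good r (1 + PowerSeries.C s * PowerSeries.X ^ d) (1 + |s| * r ^ d) (fun v => 1 + s * v ^ d) := by
  have h := (Good.monomial (r := r) 1 0).add hr (Good.monomial (r := r) s d)
  simpa using h

/-- The inverse of `1 + y^d X^d`. -/
def geo (y : ℝ) (d : ℕ) : PowerSeries ℝ :=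
  PowerSeries.mk (fun n => if d ∣ n then (-1) ^ (n / d) * y ^ n else 0)

lemma geo_mul (y : ℝ) {d : ℕ} (hd : 1 ≤ d) :
    (1 + PowerSeries.C (y ^ d) * PowerSeries.X ^ d) * geo y d = 1 := by
  ext n
  rw [add_mul, one_mul, map_add, mul_assoc, PowerSeries.coeff_C_mul, PowerSeries.coeff_X_pow_mul']
  simp only [geo, PowerSeries.coeff_mk, PowerSeries.coeff_one]
  rcases lt_or_ge n d with h | h
  · rw [if_neg (not_le.2 h)]
    rcases Nat.eq_zero_or_pos n with rfl | hn
    · simp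
    · rw [if_neg (fun hh => absurd (Nat.le_of_dvd hn hh) (not_le.2 h)), if_neg hn.ne']; simp
  · rw [if_pos h, if_neg (by omega : n ≠ 0)]
    obtain ⟨m, rfl⟩ := Nat.exists_eq_add_of_le h
    simp only [Nat.add_sub_cancel_left, Nat.dvd_add_right (dvd_refl d)]
    split_ifs with h2
    · rw [Nat.add_div_left _ (by omega)]; ring
    · simp

lemma Good.geo {r y : ℝ} (hr : 0 ≤ r) (hy : 0 ≤ y) {d : ℕ} (hd : 1 ≤ d) (hyr : y * r < 1) :
    Good r (geo y d) (1 - (y * r) ^ d)⁻¹ (fun v => (1 + (y * v) ^ d)⁻¹) := by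
  have hyr0 : 0 ≤ y * r := by positivity
  have hlt : (y * r) ^ d < 1 := pow_lt_one₀ hyr0 hyr (by omega)
  have hinj : Function.Injective (fun m : ℕ => d * m) := fun a b h =>
    Nat.eq_of_mul_eq_mul_left hd h
  have h1 : HasSum (fun n => |PowerSeries.coeff n (FFEH.geo y d)| * r ^ n) (1 - (y * r) ^ d)⁻¹ := by
    rw [← hinj.hasSum_iff]
    · convert hasSum_geometric_of_lt_one (by positivity) hlt using 2 with m
      simp only [Function.comp, FFEH.geo, PowerSeries.coeff_mk, dvd_mul_right, if_true]
      rw [abs_mul, abs_pow, abs_neg, abs_one, one_pow, one_mul, abs_of_nonneg (by positivity),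
        ← mul_pow, pow_mul]
    · intro n hn
      have : ¬ d ∣ n := fun ⟨m, hm⟩ => hn ⟨m, hm.symm⟩
      simp [FFEH.geo, this]
  refine ⟨h1.summable, h1.tsum_eq.le, ?_⟩
  intro v hv
  rw [← hinj.hasSum_iff]
  · have hn : ‖-((y : ℂ) * v) ^ d‖ < 1 := by
      rw [norm_neg, norm_pow, norm_mul, Complex.norm_real, Real.norm_of_nonneg hy]
      refine lt_of_le_of_lt ?_ hlt
      gcongr
    have hg := hasSum_geometric_of_norm_lt_one hn
    rw [sub_neg_eq_add] at hg
    refine hasSum_of_eq hg (fun m => ?_)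
    · simp only [Function.comp, FFEH.geo, PowerSeries.coeff_mk, dvd_mul_right, if_true]
      rw [Nat.mul_div_cancel_left _ (by omega : 0 < d)]
      push_cast
      rw [neg_pow (((y : ℂ) * v) ^ d), ← pow_mul, mul_pow]; ring
  · intro n hn
    have : ¬ d ∣ n := fun ⟨m, hm⟩ => hn ⟨m, hm.symm⟩
    simp [FFEH.geo, this]

lemma Good.one {r : ℝ} : Good r 1 1 (fun _ => 1) := by
  have h := Good.monomial (r := r) 1 0
  simpa using h

lemma Good.prod {ι : Type} {r : ℝ} (hr : 0 ≤ r) (S : Finset ι) {A : ι → PowerSeries ℝ} {N : ι → ℝ}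
    {φ : ι → ℂ → ℂ} (h : ∀ i ∈ S, Good r (A i) (N i) (φ i)) :
    Good r (∏ i ∈ S, A i) (∏ i ∈ S, N i) (fun v => ∏ i ∈ S, φ i v) := by
  classical
  induction S using Finset.induction_on with
  | empty => simpa using Good.one
  | insert i S hi ih =>
    simp only [Finset.prod_insert hi]
    exact (h i (Finset.mem_insert_self _ _)).mul hr
      (ih (fun j hj => h j (Finset.mem_insert_of_mem hj)))

lemma taylor_cauchy {c : ℕ → ℝ} {r ρ M : ℝ} {f : ℂ → ℂ} (hρ : 0 < ρ) (hρr : 1 + ρ < r)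
    (hs : Summable (fun n => |c n| * r ^ n))
    (hf : ∀ v : ℂ, ‖v‖ ≤ r → HasSum (fun n => (c n : ℂ) * v ^ n) (f v))
    (hM : ∀ t : ℂ, ‖t‖ = ρ → ‖f (1 + t)‖ ≤ M) (i : ℕ) :
    Summable (fun n => c n * (n.choose i : ℝ)) ∧
    |∑' n, c n * (n.choose i : ℝ)| ≤ M / ρ ^ i := by
  have hr1 : 0 < r - 1 := by linarith
  -- the double series
  have hdbl : ∀ t : ℂ, ‖t‖ ≤ r - 1 →
      Summable (fun p : ℕ × ℕ => (c p.1 : ℂ) * (p.1.choose p.2 : ℂ) * t ^ p.2) := by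
    intro t ht
    apply Summable.of_norm
    rw [summable_prod_of_nonneg (fun p => norm_nonneg _)]
    have hfin : ∀ n : ℕ, HasSum (fun i : ℕ => ‖(c n : ℂ) * (n.choose i : ℂ) * t ^ i‖)
        (|c n| * (1 + ‖t‖) ^ n) := by
      intro n
      have : |c n| * (1 + ‖t‖) ^ n =
          ∑ i ∈ Finset.range (n + 1), ‖(c n : ℂ) * (n.choose i : ℂ) * t ^ i‖ := by
        rw [add_comm, add_pow, Finset.mul_sum]
        apply Finset.sum_congr rfl
        intro i _
        simp; ring
      rw [this]
      apply hasSum_sum_of_ne_finset_zero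
      intro i hi
      rw [Finset.mem_range, not_lt] at hi
      rw [Nat.choose_eq_zero_of_lt (by omega)]; simp
    refine ⟨fun n => (hfin n).summable, ?_⟩
    simp only [(hfin _).tsum_eq]
    refine Summable.of_nonneg_of_le (fun n => by positivity) (fun n => ?_) hs
    gcongr
    linarith
  have hrow : ∀ t : ℂ, ∀ n : ℕ, HasSum (fun i : ℕ => (c n : ℂ) * (n.choose i : ℂ) * t ^ i)
      ((c n : ℂ) * (1 + t) ^ n) := by
    intro t n
    have : (c n : ℂ) * (1 + t) ^ n =
        ∑ i ∈ Finset.range (n + 1), (c n : ℂ) * (n.choose i : ℂ) * t ^ i := by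
      rw [add_comm, add_pow, Finset.mul_sum]
      apply Finset.sum_congr rfl
      intro i _
      simp; ring
    rw [this]
    apply hasSum_sum_of_ne_finset_zero
    intro i hi
    rw [Finset.mem_range, not_lt] at hi
    rw [Nat.choose_eq_zero_of_lt (by omega)]; simp
  have hcol : ∀ i : ℕ, Summable (fun n => c n * (n.choose i : ℝ)) := by
    intro i
    have h := (hdbl ((r - 1 : ℝ) : ℂ) (by rw [Complex.norm_real, Real.norm_of_nonneg hr1.le])).prod_symm.prod_factor i
    have h2 := h.mul_right ((((r - 1 : ℝ) : ℂ) ^ i)⁻¹)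
    rw [← Complex.summable_ofReal]
    refine h2.congr (fun n => ?_)
    have : (((r - 1 : ℝ) : ℂ) ^ i) ≠ 0 := pow_ne_zero _ (by exact_mod_cast hr1.ne')
    show (c n : ℂ) * (n.choose i : ℂ) * ((r - 1 : ℝ) : ℂ) ^ i * _ = _
    rw [mul_assoc, mul_inv_cancel₀ this]; push_cast; ring
  refine ⟨hcol i, ?_⟩
  set κ : ℕ → ℂ := fun i => ((∑' n, c n * (n.choose i : ℝ) : ℝ) : ℂ) with hκ
  have hser : ∀ t : ℂ, ‖t‖ ≤ r - 1 → HasSum (fun i => κ i * t ^ i) (f (1 + t)) := by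
    intro t ht
    have hd := hdbl t ht
    have hv : ‖1 + t‖ ≤ r := (norm_add_le _ _).trans (by rw [norm_one]; linarith)
    have h1 := hd.hasSum.prod_fiberwise (fun n => hrow t n)
    have h2 := (hf (1 + t) hv).unique h1
    have h3 : HasSum (fun p : ℕ × ℕ => (c p.2 : ℂ) * (p.2.choose p.1 : ℂ) * t ^ p.1) (f (1 + t)) := by
      rw [h2]
      exact (Equiv.prodComm ℕ ℕ).hasSum_iff.2 hd.hasSum
    refine h3.prod_fiberwise (fun i => ?_)
    have h4 := (Complex.hasSum_ofReal.2 (hcol i).hasSum).mul_right (t ^ i)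
    refine hasSum_of_eq h4 (fun n => ?_)
    push_cast; rfl
  have hball : HasFPowerSeriesOnBall (fun t => f (1 + t)) (FormalMultilinearSeries.ofScalars ℂ κ) 0
      (ENNReal.ofReal (r - 1)) := by
    refine ⟨?_, by simpa using hr1, ?_⟩
    · have hs1 := (hser ((r - 1 : ℝ) : ℂ) (by rw [Complex.norm_real, Real.norm_of_nonneg hr1.le])).summable.norm
      have := (FormalMultilinearSeries.ofScalars ℂ κ).le_radius_of_summable_norm (r := (r - 1).toNNReal) (by
        refine hs1.congr (fun n => ?_)
        rw [FormalMultilinearSeries.ofScalars_norm, norm_mul, norm_pow, Complex.norm_real (r - 1),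
          Real.norm_of_nonneg hr1.le, Real.coe_toNNReal _ hr1.le])
      exact this
    · intro t ht
      have ht' : ‖t‖ ≤ r - 1 := by
        have h := ht
        rw [Metric.eball_ofReal, mem_ball_zero_iff] at h
        exact h.le
      have := hser t ht'
      simp only [FormalMultilinearSeries.ofScalars_apply_eq, smul_eq_mul, zero_add]
      exact this
  have hana : AnalyticAt ℂ (fun t => f (1 + t)) 0 := hball.analyticAt
  have heq := hball.hasFPowerSeriesAt.eq_formalMultilinearSeries hana.hasFPowerSeriesAt
  rw [FormalMultilinearSeries.ofScalars_series_eq_iff] at heq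
  have hκi := congrFun heq i
  have hdiff : DiffContOnCl ℂ (fun t => f (1 + t)) (Metric.ball 0 ρ) := by
    apply DifferentiableOn.diffContOnCl_ball (U := Metric.ball 0 (r - 1))
    · have := hball.differentiableOn
      rwa [Metric.eball_ofReal] at this
    · exact Metric.closedBall_subset_ball (by linarith)
  have hC := Complex.norm_iteratedDeriv_le_of_forall_mem_sphere_norm_le i hρ hdiff
    (C := M) (fun t ht => hM t (by simpa using ht))
  have hfac : (0 : ℝ) < (i.factorial : ℝ) := by positivity
  have hnorm : ‖κ i‖ ≤ M / ρ ^ i := by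
    rw [hκi, norm_div, Complex.norm_natCast, div_le_iff₀ hfac]
    calc _ ≤ _ := hC
      _ = _ := by ring
  rwa [hκ, Complex.norm_real, Real.norm_eq_abs] at hnorm

end PartB
section PartC

lemma sumY (q : ℕ) {r η : ℝ} (hr : 1 < r) (hη : 0 < η) :
    ∃ A : ℝ, ∀ (ι : Type) (S : Finset ι) (d : ι → ℕ) (D : ℕ), (∀ i ∈ S, 1 ≤ d i) →
      ∑ i ∈ S, d i ≤ 2 * D → (∀ e, e * (S.filter (fun i => d i = e)).card ≤ q ^ e) →
      ∑ i ∈ S, (r⁻¹) ^ (d i) ≤ A + η * D := by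
  have hr0 : 0 ≤ r⁻¹ := by positivity
  have hr1 : r⁻¹ < 1 := inv_lt_one_of_one_lt₀ hr
  obtain ⟨Y, hY⟩ := exists_pow_lt_of_lt_one (half_pos hη) hr1
  refine ⟨∑ e ∈ Finset.range (Y + 1), (q : ℝ) ^ e, ?_⟩
  intro ι S d D hd hsum hcount
  rw [← Finset.sum_filter_add_sum_filter_not S (fun i => d i ≤ Y)]
  apply add_le_add
  · calc ∑ i ∈ S.filter (fun i => d i ≤ Y), (r⁻¹) ^ (d i)
        ≤ ∑ i ∈ S.filter (fun i => d i ≤ Y), (1 : ℝ) :=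
          Finset.sum_le_sum (fun i _ => pow_le_one₀ hr0 hr1.le)
      _ = ((S.filter (fun i => d i ≤ Y)).card : ℝ) := by simp
      _ = ((∑ e ∈ Finset.range (Y + 1), ((S.filter (fun i => d i ≤ Y)).filter (fun i => d i = e)).card : ℕ) : ℝ) := by
          rw [← Finset.card_eq_sum_card_fiberwise]
          intro i hi
          have := (Finset.mem_filter.1 (Finset.mem_coe.1 hi)).2
          simp only [Finset.coe_range, Set.mem_Iio]; omega
      _ ≤ _ := by
          push_cast
          apply Finset.sum_le_sum
          intro e _
          have h1 : ((S.filter (fun i => d i ≤ Y)).filter (fun i => d i = e)).card ≤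
              (S.filter (fun i => d i = e)).card := by
            apply Finset.card_le_card
            intro i; simp only [Finset.mem_filter]; tauto
          have h2 : (S.filter (fun i => d i = e)).card ≤ q ^ e := by
            rcases Nat.eq_zero_or_pos e with rfl | he
            · have : S.filter (fun i => d i = 0) = ∅ := by
                apply Finset.filter_eq_empty_iff.2
                intro i hi h; have := hd i hi; omega
              simp [this]
            · exact le_trans (Nat.le_mul_of_pos_left _ he) (hcount e)
          exact_mod_cast h1.trans h2
  · have hc : ((S.filter (fun i => ¬ d i ≤ Y)).card : ℝ) ≤ 2 * D := by
      have : (S.filter (fun i => ¬ d i ≤ Y)).card ≤ 2 * D := by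
        refine le_trans ?_ hsum
        rw [Finset.card_eq_sum_ones]
        refine le_trans (Finset.sum_le_sum (fun i hi => hd i (Finset.mem_filter.1 hi).1)) ?_
        exact Finset.sum_le_sum_of_subset (Finset.filter_subset _ _)
      exact_mod_cast this
    calc ∑ i ∈ S.filter (fun i => ¬ d i ≤ Y), (r⁻¹) ^ (d i)
        ≤ ∑ i ∈ S.filter (fun i => ¬ d i ≤ Y), (η / 2) := by
          apply Finset.sum_le_sum
          intro i hi
          have := (Finset.mem_filter.1 hi).2
          exact (pow_le_pow_of_le_one hr0 hr1.le (by omega)).trans hY.le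
      _ = ((S.filter (fun i => ¬ d i ≤ Y)).card : ℝ) * (η / 2) := by simp
      _ ≤ 2 * D * (η / 2) := by gcongr
      _ = η * D := by ring

lemma pow_sub_one_le {a : ℝ} (ha : 1 ≤ a) (e : ℕ) : a ^ e - 1 ≤ e * (a - 1) * a ^ e := by
  induction e with
  | zero => simp
  | succ e ih =>
    have h1 : 1 ≤ a ^ (e + 1) := one_le_pow₀ ha
    have h2 : a * (a ^ e - 1) ≤ a * (e * (a - 1) * a ^ e) := by gcongr
    have h3 : (a - 1) * 1 ≤ (a - 1) * a ^ (e + 1) := by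
      apply mul_le_mul_of_nonneg_left h1; linarith
    rw [pow_succ] at *
    push_cast
    nlinarith

lemma small_sum {q : ℕ} (hq : 2 ≤ q) {ι : Type} (S : Finset ι) (d : ι → ℕ) (D : ℕ) (hD : 2 ≤ D)
    (hd : ∀ i ∈ S, 1 ≤ d i) (hsum : ∑ i ∈ S, d i ≤ 2 * D)
    (hcount : ∀ e, e * (S.filter (fun i => d i = e)).card ≤ q ^ e)
    (Y : ℕ) (hY : Y = 2 * Nat.log 2 D + 2) (ρ : ℝ) (hρ : ρ = 1 / (Y : ℝ)) :
    ∑ i ∈ S, ((q : ℝ)⁻¹) ^ (d i) * ((1 + ρ) ^ (d i) - 1) ≤ 5 := by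
  have hL : 1 ≤ Nat.log 2 D := Nat.log_pos (by norm_num) hD
  have hY4 : (4 : ℝ) ≤ Y := by
    have : 4 ≤ Y := by omega
    exact_mod_cast this
  have hYpos : (0 : ℝ) < Y := by linarith
  have hρ0 : 0 < ρ := by rw [hρ]; positivity
  have hρ3 : ρ ≤ 1 / 4 := by rw [hρ]; exact one_div_le_one_div_of_le (by norm_num) hY4
  have hq2 : (2 : ℝ) ≤ q := by exact_mod_cast hq
  have hqp : (0 : ℝ) < q := by linarith
  rw [← Finset.sum_filter_add_sum_filter_not S (fun i => d i ≤ Y)]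
  have h1 : ∑ i ∈ S.filter (fun i => d i ≤ Y), ((q : ℝ)⁻¹) ^ (d i) * ((1 + ρ) ^ (d i) - 1) ≤ 3 := by
    rw [← Finset.sum_fiberwise_of_maps_to (t := Finset.Icc 1 Y) (g := d) (by
      intro i hi
      rw [Finset.mem_filter] at hi
      exact Finset.mem_Icc.2 ⟨hd i hi.1, hi.2⟩)]
    calc _ ≤ ∑ e ∈ Finset.Icc 1 Y, (3 * ρ) := by
          apply Finset.sum_le_sum
          intro e he
          rw [Finset.mem_Icc] at he
          rw [Finset.sum_congr rfl (g := fun _ => ((q : ℝ)⁻¹) ^ e * ((1 + ρ) ^ e - 1)) (by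
            intro i hi; rw [(Finset.mem_filter.1 hi).2]), Finset.sum_const, nsmul_eq_mul]
          have hcard : (e : ℝ) * (((S.filter (fun i => d i ≤ Y)).filter (fun i => d i = e)).card : ℝ) ≤ (q : ℝ) ^ e := by
            have h1 : ((S.filter (fun i => d i ≤ Y)).filter (fun i => d i = e)).card ≤
                (S.filter (fun i => d i = e)).card := by
              apply Finset.card_le_card
              intro i; simp only [Finset.mem_filter]; tauto
            have := (Nat.mul_le_mul_left e h1).trans (hcount e)
            exact_mod_cast this
          set n : ℝ := (((S.filter (fun i => d i ≤ Y)).filter (fun i => d i = e)).card : ℝ) with hn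
          have hn0 : 0 ≤ n := by positivity
          have hb := pow_sub_one_le (a := 1 + ρ) (by linarith) e
          have hexp : (1 + ρ) ^ e ≤ 3 := by
            calc (1 + ρ) ^ e ≤ (Real.exp ρ) ^ e := by
                  gcongr; linarith [Real.add_one_le_exp ρ]
              _ = Real.exp (e * ρ) := by rw [← Real.exp_nat_mul]
              _ ≤ Real.exp 1 := by
                  apply Real.exp_le_exp.2
                  rw [hρ, mul_one_div, div_le_one hYpos]
                  exact_mod_cast he.2
              _ ≤ 3 := by linarith [Real.exp_one_lt_d9]
          have hq' : ((q : ℝ)⁻¹) ^ e * (q : ℝ) ^ e = 1 := by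
            rw [← mul_pow, inv_mul_cancel₀ hqp.ne', one_pow]
          calc n * (((q : ℝ)⁻¹) ^ e * ((1 + ρ) ^ e - 1))
              ≤ n * (((q : ℝ)⁻¹) ^ e * (e * (1 + ρ - 1) * 3)) := by
                gcongr
                refine hb.trans ?_
                have h0 : (0 : ℝ) ≤ e * (1 + ρ - 1) := by rw [add_sub_cancel_left]; positivity
                gcongr
            _ = (e * n) * ((q : ℝ)⁻¹) ^ e * (3 * ρ) := by ring
            _ ≤ (q : ℝ) ^ e * ((q : ℝ)⁻¹) ^ e * (3 * ρ) := by gcongr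
            _ = 3 * ρ := by rw [mul_comm ((q : ℝ) ^ e), hq', one_mul]
      _ = 3 := by
          rw [Finset.sum_const, Nat.card_Icc, nsmul_eq_mul, hρ]
          simp only [Nat.add_sub_cancel]
          field_simp
  have h2 : ∑ i ∈ S.filter (fun i => ¬ d i ≤ Y), ((q : ℝ)⁻¹) ^ (d i) * ((1 + ρ) ^ (d i) - 1) ≤ 2 := by
    have hDpos : (0 : ℝ) < D := by
      have : 0 < D := by omega
      exact_mod_cast this
    have hc : ((S.filter (fun i => ¬ d i ≤ Y)).card : ℝ) ≤ 2 * D := by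
      have : (S.filter (fun i => ¬ d i ≤ Y)).card ≤ 2 * D := by
        refine le_trans ?_ hsum
        rw [Finset.card_eq_sum_ones]
        refine le_trans (Finset.sum_le_sum (fun i hi => hd i (Finset.mem_filter.1 hi).1)) ?_
        exact Finset.sum_le_sum_of_subset (Finset.filter_subset _ _)
      exact_mod_cast this
    have hYD : ((2 : ℝ) / 3) ^ Y ≤ 1 / D := by
      have h2 : (D : ℝ) ≤ 2 ^ (Nat.log 2 D + 1) := by
        exact_mod_cast (Nat.lt_pow_succ_log_self (by norm_num) D).le
      calc ((2 : ℝ) / 3) ^ Y = (((2 : ℝ) / 3) ^ 2) ^ (Nat.log 2 D + 1) := by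
            rw [← pow_mul, hY]; congr 1
        _ ≤ (1 / 2) ^ (Nat.log 2 D + 1) := by gcongr; norm_num
        _ = 1 / 2 ^ (Nat.log 2 D + 1) := by rw [one_div_pow]
        _ ≤ 1 / D := one_div_le_one_div_of_le hDpos h2
    calc _ ≤ ∑ i ∈ S.filter (fun i => ¬ d i ≤ Y), (1 / (D : ℝ)) := by
          apply Finset.sum_le_sum
          intro i hi
          have hi := (Finset.mem_filter.1 hi).2
          refine le_trans ?_ hYD
          calc ((q : ℝ)⁻¹) ^ (d i) * ((1 + ρ) ^ (d i) - 1)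
              ≤ ((q : ℝ)⁻¹) ^ (d i) * (1 + ρ) ^ (d i) := by gcongr; linarith
            _ = ((q : ℝ)⁻¹ * (1 + ρ)) ^ (d i) := by rw [mul_pow]
            _ ≤ (2 / 3) ^ (d i) := by
                gcongr
                have : (q : ℝ)⁻¹ ≤ 2⁻¹ := inv_anti₀ (by norm_num) hq2
                calc (q : ℝ)⁻¹ * (1 + ρ) ≤ 2⁻¹ * (1 + 1 / 4) := by gcongr
                  _ ≤ 2 / 3 := by norm_num
            _ ≤ _ := pow_le_pow_of_le_one (by norm_num) (by norm_num) (by omega)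
      _ = ((S.filter (fun i => ¬ d i ≤ Y)).card : ℝ) * (1 / D) := by simp
      _ ≤ 2 * D * (1 / D) := by gcongr
      _ = 2 := by field_simp
  linarith

lemma norm_pow_sub_one_le {t : ℂ} {ρ : ℝ} (ht : ‖t‖ = ρ) (d : ℕ) :
    ‖(1 + t) ^ d - 1‖ ≤ (1 + ρ) ^ d - 1 := by
  have hρ : 0 ≤ ρ := ht ▸ norm_nonneg t
  induction d with
  | zero => simp
  | succ d ih =>
    have : (1 + t) ^ (d + 1) - 1 = ((1 + t) ^ d - 1) * (1 + t) + t := by ring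
    rw [this]
    have h1 : ‖1 + t‖ ≤ 1 + ρ := (norm_add_le _ _).trans (by rw [norm_one, ht])
    calc _ ≤ ‖((1 + t) ^ d - 1) * (1 + t)‖ + ‖t‖ := norm_add_le _ _
      _ ≤ ((1 + ρ) ^ d - 1) * (1 + ρ) + ρ := by
          rw [norm_mul, ht]; gcongr
          exact le_trans (norm_nonneg _) ih
      _ = _ := by ring

lemma one_sub_ge_exp {u : ℝ} (h0 : 0 ≤ u) (h1 : u ≤ 1 / 2) : Real.exp (-(2 * u)) ≤ 1 - u := by
  rw [Real.exp_neg, inv_le_comm₀ (Real.exp_pos _) (by linarith)]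
  have := Real.add_one_le_exp (2 * u)
  refine le_trans ?_ this
  rw [inv_le_iff_one_le_mul₀ (by linarith)]
  nlinarith

lemma one_sub_ge_exp4 {u : ℝ} (h0 : 0 ≤ u) (h1 : u ≤ 3 / 4) : (1 - u)⁻¹ ≤ Real.exp (4 * u) := by
  have := Real.add_one_le_exp (4 * u)
  refine le_trans ?_ this
  rw [inv_le_iff_one_le_mul₀ (by linarith)]
  nlinarith

/-- local factor on the small circle -/
lemma local_bound {q : ℕ} (hq : 2 ≤ q) {t : ℂ} {ρ : ℝ} (ht : ‖t‖ = ρ) (hρ : ρ ≤ 1 / 4) {d : ℕ}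
    (hd : 1 ≤ d) {σ : ℝ} (hσ : σ = -1 ∨ σ = 0) :
    ‖(1 + ((σ * ((q : ℝ)⁻¹) ^ d : ℝ) : ℂ) * (1 + t) ^ d) * (1 + (((q : ℝ)⁻¹ : ℝ) * (1 + t)) ^ d)⁻¹‖ ≤
      (1 + σ * ((q : ℝ)⁻¹) ^ d) / (1 + ((q : ℝ)⁻¹) ^ d) *
        Real.exp (4 * (((q : ℝ)⁻¹) ^ d * ((1 + ρ) ^ d - 1))) := by
  have hρ0 : 0 ≤ ρ := ht ▸ norm_nonneg t
  have hq2 : (2 : ℝ) ≤ q := by exact_mod_cast hq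
  have hqp : (0 : ℝ) < q := by linarith
  have hqi : (q : ℝ)⁻¹ ≤ 1 / 2 := by rw [one_div]; exact inv_anti₀ (by norm_num) hq2
  set x : ℝ := ((q : ℝ)⁻¹) ^ d with hx
  set ε : ℝ := (1 + ρ) ^ d - 1 with hε
  have hx0 : 0 < x := by positivity
  have hx2 : x ≤ 1 / 2 := (pow_le_of_le_one (by positivity) (by linarith) (by omega)).trans hqi
  have hε0 : 0 ≤ ε := by
    rw [hε]; linarith [one_le_pow₀ (a := 1 + ρ) (n := d) (by linarith)]
  have hxe : x * ε ≤ 1 / 2 := by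
    have h1 : x * (1 + ρ) ^ d ≤ (5 / 8) ^ d := by
      rw [hx, ← mul_pow]
      gcongr
      calc (q : ℝ)⁻¹ * (1 + ρ) ≤ 1 / 2 * (1 + 1 / 4) := by gcongr
        _ = 5 / 8 := by norm_num
    rcases Nat.lt_or_ge d 2 with h | h
    · have : d = 1 := by omega
      subst this
      rw [hε, pow_one]
      nlinarith
    · have h2 : ((5 : ℝ) / 8) ^ d ≤ (5 / 8) ^ 2 :=
        pow_le_pow_of_le_one (by norm_num) (by norm_num) h
      have : x * ε ≤ x * (1 + ρ) ^ d := by rw [hε]; gcongr; linarith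
      norm_num at h2 ⊢
      linarith
  have hxe0 : 0 ≤ x * ε := by positivity
  have hw := norm_pow_sub_one_le ht d
  rw [← hε] at hw
  set w : ℂ := (1 + t) ^ d with hwdef
  have hpow : (((q : ℝ)⁻¹ : ℝ) * (1 + t)) ^ d = (x : ℂ) * w := by
    rw [mul_pow, hx]; push_cast; rfl
  rw [hpow, norm_mul, norm_inv]
  have hnum : ‖1 + ((σ * x : ℝ) : ℂ) * w‖ ≤ (1 + σ * x) * Real.exp (2 * (x * ε)) := by
    rcases hσ with rfl | rfl
    · have e : (1 : ℂ) + ((-1 * x : ℝ) : ℂ) * w = ((1 - x : ℝ) : ℂ) + (-(x : ℂ)) * (w - 1) := by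
        push_cast; ring
      rw [e]
      calc _ ≤ ‖((1 - x : ℝ) : ℂ)‖ + ‖(-(x : ℂ)) * (w - 1)‖ := norm_add_le _ _
        _ ≤ (1 - x) + x * ε := by
            rw [norm_mul, norm_neg, Complex.norm_real, Complex.norm_real,
              Real.norm_of_nonneg hx0.le, Real.norm_of_nonneg (by linarith)]
            gcongr
        _ ≤ (1 - x) * (1 + 2 * (x * ε)) := by nlinarith
        _ ≤ (1 + -1 * x) * Real.exp (2 * (x * ε)) := by
            have := Real.add_one_le_exp (2 * (x * ε))
            have h : 0 ≤ 1 - x := by linarith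
            nlinarith
    · simp only [zero_mul, Complex.ofReal_zero, add_zero, norm_one, one_mul]
      exact Real.one_le_exp (by positivity)
  have hden : (1 + x) * Real.exp (-(2 * (x * ε))) ≤ ‖1 + (x : ℂ) * w‖ := by
    have e : (1 : ℂ) + (x : ℂ) * w = ((1 + x : ℝ) : ℂ) - (-((x : ℂ) * (w - 1))) := by
      push_cast; ring
    rw [e]
    calc _ ≤ (1 + x) * (1 - x * ε) := by
          gcongr; exact one_sub_ge_exp hxe0 hxe
      _ ≤ (1 + x) - x * ε := by nlinarith
      _ ≤ ‖((1 + x : ℝ) : ℂ)‖ - ‖-((x : ℂ) * (w - 1))‖ := by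
          rw [norm_neg, norm_mul, Complex.norm_real, Complex.norm_real,
            Real.norm_of_nonneg hx0.le, Real.norm_of_nonneg (by linarith)]
          gcongr
      _ ≤ _ := norm_sub_norm_le _ _
  have hdp : 0 < (1 + x) * Real.exp (-(2 * (x * ε))) := by positivity
  have hs : 0 ≤ 1 + σ * x := by rcases hσ with rfl | rfl <;> linarith
  calc _ ≤ ((1 + σ * x) * Real.exp (2 * (x * ε))) * ((1 + x) * Real.exp (-(2 * (x * ε))))⁻¹ := by
        gcongr
    _ = _ := by
        rw [mul_inv, Real.exp_neg, inv_inv, show 4 * (x * ε) = 2 * (x * ε) + 2 * (x * ε) by ring,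
          Real.exp_add]
        ring

lemma local_norm {q : ℕ} (hq : 2 ≤ q) {r : ℝ} (hr : 0 < r) (hrq : r ^ 2 = q) {d : ℕ}
    (hd : 1 ≤ d) {σ : ℝ} (hσ : σ = -1 ∨ σ = 0) :
    (1 + |σ * ((q : ℝ)⁻¹) ^ d| * r ^ d) * (1 - ((q : ℝ)⁻¹ * r) ^ d)⁻¹ ≤ Real.exp (5 * (r⁻¹) ^ d) ∧
    Real.exp (-(3 * (r⁻¹) ^ d)) ≤ (1 + σ * ((q : ℝ)⁻¹) ^ d) / (1 + ((q : ℝ)⁻¹) ^ d) := by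
  have hq2 : (2 : ℝ) ≤ q := by exact_mod_cast hq
  have hqp : (0 : ℝ) < q := by linarith
  have hqi : (q : ℝ)⁻¹ ≤ 1 / 2 := by rw [one_div]; exact inv_anti₀ (by norm_num) hq2
  have hyr : (q : ℝ)⁻¹ * r = r⁻¹ := by rw [← hrq]; field_simp
  have hr43 : 4 / 3 ≤ r := by nlinarith
  have hri : r⁻¹ ≤ 3 / 4 := by
    have := inv_anti₀ (by norm_num) hr43
    norm_num at this ⊢; exact this
  have hri0 : 0 < r⁻¹ := by positivity
  have hxu : ((q : ℝ)⁻¹) ^ d ≤ (r⁻¹) ^ d := by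
    gcongr
    nlinarith
  have hprod : ((q : ℝ)⁻¹) ^ d * r ^ d = (r⁻¹) ^ d := by rw [← mul_pow, hyr]
  rw [hyr]
  set u := (r⁻¹) ^ d with hu
  set x := ((q : ℝ)⁻¹) ^ d with hx
  have hx0 : 0 < x := by positivity
  have hu0 : 0 < u := by positivity
  have hx2 : x ≤ 1 / 2 := (pow_le_of_le_one (by positivity) (by linarith) (by omega)).trans hqi
  have hu34 : u ≤ 3 / 4 := (pow_le_of_le_one hri0.le (by linarith) (by omega)).trans hri
  constructor
  · have h1 : 1 + |σ * x| * r ^ d ≤ Real.exp u := by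
      have : |σ * x| * r ^ d ≤ u := by
        rw [← hprod]; gcongr
        rcases hσ with rfl | rfl
        · simp [abs_of_pos hx0]
        · simp [hx0.le]
      linarith [Real.add_one_le_exp u]
    calc _ ≤ Real.exp u * Real.exp (4 * u) := by
          have h0 : 0 ≤ (1 - u)⁻¹ := inv_nonneg.2 (by linarith)
          gcongr
          exact one_sub_ge_exp4 hu0.le hu34
      _ = _ := by rw [← Real.exp_add]; congr 1; ring
  · have h1 : Real.exp (-(2 * x)) ≤ 1 + σ * x := by
      refine (one_sub_ge_exp hx0.le hx2).trans ?_
      rcases hσ with rfl | rfl <;> linarith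
    have h2 : 1 + x ≤ Real.exp x := by linarith [Real.add_one_le_exp x]
    calc Real.exp (-(3 * u)) ≤ Real.exp (-(3 * x)) := by
          apply Real.exp_le_exp.2; linarith
      _ = Real.exp (-(2 * x)) / Real.exp x := by
          rw [← Real.exp_sub]; congr 1; ring
      _ ≤ _ := by gcongr; exact le_trans (Real.exp_pos _).le h1

end PartC
section PartD

lemma choose_expand (n Z J : ℕ) (h : n ≤ Z) : (((Z - n).choose J : ℕ) : ℝ) =
    ∑ i ∈ Finset.range (J + 1), (-1 : ℝ) ^ i * (n.choose i : ℝ) * ((Z - i).choose (J - i) : ℝ) := by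
  induction n generalizing Z J with
  | zero =>
    rw [Finset.sum_range_succ']
    simp
  | succ n ih =>
    cases J with
    | zero => simp
    | succ J =>
      obtain ⟨W, rfl⟩ : ∃ W, Z = W + 1 := ⟨Z - 1, by omega⟩
      have h1 := ih (W + 1) (J + 1) (by omega)
      have h2 := ih W J (by omega)
      have hp : (W + 1 - n).choose (J + 1) = (W - n).choose J + (W - n).choose (J + 1) := by
        rw [show W + 1 - n = (W - n) + 1 by omega, Nat.choose_succ_succ]
      have hp' : ((W + 1 - n).choose (J + 1) : ℝ) = (W - n).choose J + (W - n).choose (J + 1) := by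
        exact_mod_cast hp
      have hg : W + 1 - (n + 1) = W - n := by omega
      rw [hg]
      have : ((W - n).choose (J + 1) : ℝ) = (W + 1 - n).choose (J + 1) - (W - n).choose J := by
        rw [hp']; ring
      rw [this, h1, h2, Finset.sum_range_succ' _ (J + 1), Finset.sum_range_succ' _ (J + 1)]
      have e : ∀ i, (W + 1 - (i + 1)).choose (J + 1 - (i + 1)) = (W - i).choose (J - i) := by
        intro i; congr 1 <;> omega
      simp only [e]
      have : ∑ i ∈ Finset.range (J + 1), (-1 : ℝ) ^ (i + 1) * ((n + 1).choose (i + 1) : ℝ) * ((W - i).choose (J - i) : ℝ)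
        = ∑ i ∈ Finset.range (J + 1), (-1 : ℝ) ^ (i + 1) * (n.choose (i + 1) : ℝ) * ((W - i).choose (J - i) : ℝ)
         - ∑ i ∈ Finset.range (J + 1), (-1 : ℝ) ^ i * (n.choose i : ℝ) * ((W - i).choose (J - i) : ℝ) := by
        rw [← Finset.sum_sub_distrib]
        refine Finset.sum_congr rfl fun i _ => ?_
        rw [Nat.choose_succ_succ]; push_cast; ring
      rw [this]; simp; ring

lemma choose_le_pow' (a m n : ℕ) (h : a ≤ n) : ((a.choose m : ℕ) : ℝ) ≤ (n : ℝ) ^ m := by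
  have h1 : a.choose m ≤ n ^ m := (Nat.choose_le_pow a m).trans (Nat.pow_le_pow_left h m)
  exact_mod_cast h1

set_option maxHeartbeats 1000000 in
lemma core_tail (J : ℕ) {s r : ℝ} (hs : 1 < s) (hsr : s ^ 2 = r) :
    ∃ B : ℝ, 0 < B ∧ ∀ (c : ℕ → ℝ) (Z : ℕ) (N : ℝ), Summable (fun n => |c n| * r ^ n) →
      (∑' n, |c n| * r ^ n) ≤ N → (∀ i, Summable (fun n => c n * (n.choose i : ℝ))) →
      |∑ n ∈ Finset.range (Z + 1), c n * ((Z - n).choose J : ℝ) -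
        ∑ i ∈ Finset.range (J + 1), (-1 : ℝ) ^ i * ((Z - i).choose (J - i) : ℝ) *
          ∑' n, c n * (n.choose i : ℝ)| ≤ B * N / s ^ Z := by
  have hs0 : 0 < s := by linarith
  have hlim : Filter.Tendsto (fun n : ℕ => (n : ℝ) ^ J / s ^ n) Filter.atTop (nhds 0) :=
    tendsto_pow_const_div_const_pow_of_one_lt J hs
  obtain ⟨B0, hB0⟩ := hlim.bddAbove_range
  have hB : ∀ n : ℕ, (n : ℝ) ^ J ≤ B0 * s ^ n := fun n => by
    have := hB0 (Set.mem_range_self n)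
    rwa [div_le_iff₀ (by positivity)] at this
  have hB0' : 0 ≤ B0 := le_trans (by positivity) (hB0 (Set.mem_range_self 0))
  refine ⟨(J + 1) * (B0 + 1), by positivity, ?_⟩
  intro c Z N hsum hN hsi
  set R : ℕ → ℝ := fun n => ∑ i ∈ Finset.range (J + 1), (-1 : ℝ) ^ i * (n.choose i : ℝ) * ((Z - i).choose (J - i) : ℝ) with hR
  have hHas : HasSum (fun n => c n * R n) (∑ i ∈ Finset.range (J + 1), (-1 : ℝ) ^ i * ((Z - i).choose (J - i) : ℝ) *
          ∑' n, c n * (n.choose i : ℝ)) := by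
    have := hasSum_sum (s := Finset.range (J + 1)) (fun i _ => ((hsi i).hasSum.mul_left ((-1 : ℝ) ^ i * ((Z - i).choose (J - i) : ℝ))))
    have e : (fun n => c n * R n) = fun n => ∑ i ∈ Finset.range (J + 1),
        (-1 : ℝ) ^ i * ((Z - i).choose (J - i) : ℝ) * (c n * (n.choose i : ℝ)) := by
      funext n
      rw [hR]; simp only
      rw [Finset.mul_sum]
      exact Finset.sum_congr rfl fun i _ => by ring
    rw [e]; exact this
  have hRn : ∀ n, Z ≤ n → |c n * R n| ≤ (J + 1) * (B0 + 1) / s ^ Z * (|c n| * r ^ n) := by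
    intro n hn
    have h1 : |R n| ≤ (J + 1) * (n : ℝ) ^ J := by
      calc |R n| ≤ ∑ i ∈ Finset.range (J + 1), |(-1 : ℝ) ^ i * (n.choose i : ℝ) * ((Z - i).choose (J - i) : ℝ)| :=
            Finset.abs_sum_le_sum_abs _ _
        _ ≤ ∑ i ∈ Finset.range (J + 1), (n : ℝ) ^ J := by
            refine Finset.sum_le_sum fun i hi => ?_
            have hi' : i ≤ J := by simpa [Nat.lt_succ_iff] using hi
            rw [abs_mul, abs_mul, abs_pow, abs_neg, abs_one, one_pow, one_mul, Nat.abs_cast, Nat.abs_cast]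
            calc _ ≤ (n : ℝ) ^ i * (n : ℝ) ^ (J - i) := by
                  gcongr
                  · exact choose_le_pow' _ _ _ le_rfl
                  · exact choose_le_pow' _ _ _ (by omega)
              _ = _ := by rw [← pow_add]; congr 1; omega
        _ = _ := by simp
    have h2 : s ^ Z ≤ s ^ n := pow_le_pow_right₀ hs.le hn
    have h3 : r ^ n = s ^ n * s ^ n := by rw [← hsr]; ring
    rw [abs_mul, div_mul_eq_mul_div, le_div_iff₀ (by positivity)]
    calc |c n| * |R n| * s ^ Z ≤ |c n| * ((J + 1) * ((B0 + 1) * s ^ n)) * s ^ n := by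
          gcongr
          refine h1.trans ?_
          gcongr
          exact (hB n).trans (by gcongr; linarith)
      _ = _ := by rw [h3]; ring
  rw [← hHas.tsum_eq, ← hHas.summable.sum_add_tsum_nat_add (Z + 1)]
  have hfin : ∑ n ∈ Finset.range (Z + 1), c n * ((Z - n).choose J : ℝ) = ∑ n ∈ Finset.range (Z + 1), c n * R n := by
    refine Finset.sum_congr rfl fun n hn => ?_
    rw [choose_expand n Z J (by simpa [Nat.lt_succ_iff] using hn)]
  rw [hfin, sub_add_cancel_left, abs_neg]
  have hsh : Summable (fun n => |c (n + (Z + 1))| * r ^ (n + (Z + 1))) := (summable_nat_add_iff (Z + 1)).2 hsum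
  have hr0 : 0 ≤ r := by rw [← hsr]; positivity
  have htail : ∑' n, |c (n + (Z + 1))| * r ^ (n + (Z + 1)) ≤ N := by
    refine le_trans ?_ hN
    rw [← hsum.sum_add_tsum_nat_add (Z + 1)]
    have : 0 ≤ ∑ i ∈ Finset.range (Z + 1), |c i| * r ^ i := Finset.sum_nonneg fun i _ => by positivity
    linarith
  have := tsum_of_norm_bounded (f := fun n => c (n + (Z + 1)) * R (n + (Z + 1))) (hsh.hasSum.mul_left ((J + 1) * (B0 + 1) / s ^ Z))
    (fun n => hRn (n + (Z + 1)) (by omega))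
  rw [Real.norm_eq_abs] at this
  refine this.trans ?_
  calc _ ≤ (J + 1) * (B0 + 1) / s ^ Z * N := by gcongr
    _ = _ := by ring

lemma assemble (J : ℕ) (hJ : 1 ≤ J) (M : ℝ) (hM : 0 ≤ M) (κ : ℕ → ℝ) (K Y : ℝ) (z : ℕ) (hK : 0 ≤ K)
    (hY1 : 1 ≤ Y) (hYz : Y ≤ z) (hz : 2 ≤ z) (h0 : κ 0 = K) (hκ : ∀ i, |κ i| ≤ M * K * Y ^ i) :
    |∑ i ∈ Finset.range (J + 1), (-1 : ℝ) ^ i * ((z + 2 - i).choose (J - i) : ℝ) * κ i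
      - K * ((z : ℝ) ^ J / (J.factorial : ℝ))| ≤ ((J + 2) * J * 2 ^ J + J * 2 ^ J * M) * K * (z : ℝ) ^ (J - 1) * Y := by
  have hz2 : (2 : ℝ) ≤ z := by exact_mod_cast hz
  have hz0 : (0 : ℝ) < z := by linarith
  have hJf : (1 : ℝ) ≤ (J.factorial : ℝ) := by exact_mod_cast Nat.succ_le_of_lt (Nat.factorial_pos J)
  have hb : ∀ a : ℕ, a ≤ z + 2 → z ≤ a + (J + 2) → |(a : ℝ) ^ J - (z : ℝ) ^ J| ≤ (J + 2) * J * 2 ^ J * (z : ℝ) ^ (J - 1) := by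
    intro a ha1 ha2
    have ha1' : (a : ℝ) ≤ z + 2 := by exact_mod_cast ha1
    have ha2' : (z : ℝ) ≤ a + (J + 2) := by exact_mod_cast ha2
    have hJ0 : (0 : ℝ) ≤ J := by positivity
    have hA : |(a : ℝ) - z| ≤ J + 2 := by rw [abs_le]; constructor <;> linarith
    have hB : max |(a : ℝ)| |(z : ℝ)| ≤ 2 * z := by
      rw [Nat.abs_cast, Nat.abs_cast]; exact max_le (by linarith) (by linarith)
    calc _ ≤ |(a : ℝ) - z| * J * max |(a : ℝ)| |(z : ℝ)| ^ (J - 1) := abs_pow_sub_pow_le _ _ _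
      _ ≤ (J + 2) * J * (2 * z) ^ (J - 1) := by gcongr
      _ = (J + 2) * J * 2 ^ (J - 1) * z ^ (J - 1) := by rw [mul_pow]; ring
      _ ≤ _ := by gcongr <;> first | norm_num | omega
  have hmain : |((z + 2).choose J : ℝ) - (z : ℝ) ^ J / (J.factorial : ℝ)| ≤ (J + 2) * J * 2 ^ J * (z : ℝ) ^ (J - 1) := by
    have e : ((z + 2).choose J : ℝ) = ((z + 2).descFactorial J : ℝ) / (J.factorial : ℝ) := by
      rw [Nat.descFactorial_eq_factorial_mul_choose]; push_cast; field_simp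
    have u : ((z + 2).descFactorial J : ℝ) ≤ ((z + 2 : ℕ) : ℝ) ^ J := by
      exact_mod_cast Nat.descFactorial_le_pow (z + 2) J
    have l : ((z + 2 + 1 - J : ℕ) : ℝ) ^ J ≤ ((z + 2).descFactorial J : ℝ) := by
      exact_mod_cast Nat.pow_sub_le_descFactorial (z + 2) J
    have u' := hb (z + 2) le_rfl (by omega)
    have l' := hb (z + 2 + 1 - J) (by omega) (by omega)
    rw [abs_le] at u' l'
    rw [e, ← sub_div, abs_div, Nat.abs_cast]
    refine (div_le_self (abs_nonneg _) hJf).trans ?_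
    rw [abs_le]; constructor <;> linarith
  rw [Finset.sum_range_succ']
  simp only [pow_zero, Nat.sub_zero, one_mul, h0]
  have hrest : |∑ i ∈ Finset.range J, (-1 : ℝ) ^ (i + 1) * ((z + 2 - (i + 1)).choose (J - (i + 1)) : ℝ) * κ (i + 1)| ≤
      J * (2 ^ J * M * K * (z : ℝ) ^ (J - 1) * Y) := by
    refine (Finset.abs_sum_le_sum_abs _ _).trans ?_
    have : ∀ i ∈ Finset.range J, |(-1 : ℝ) ^ (i + 1) * ((z + 2 - (i + 1)).choose (J - (i + 1)) : ℝ) * κ (i + 1)| ≤ 2 ^ J * M * K * (z : ℝ) ^ (J - 1) * Y := by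
      intro i hi
      rw [Finset.mem_range] at hi
      rw [abs_mul, abs_mul, abs_pow, abs_neg, abs_one, one_pow, one_mul, Nat.abs_cast]
      have h1 : ((z + 2 - (i + 1)).choose (J - (i + 1)) : ℝ) ≤ (2 * z) ^ (J - (i + 1)) := by
        have := choose_le_pow' (z + 2 - (i + 1)) (J - (i + 1)) (2 * z) (by omega)
        rw [Nat.cast_mul, Nat.cast_ofNat] at this; exact this
      calc _ ≤ (2 * (z : ℝ)) ^ (J - (i + 1)) * (M * K * Y ^ (i + 1)) := by
            gcongr; exact hκ _
        _ = 2 ^ (J - (i + 1)) * M * K * (z ^ (J - (i + 1)) * Y ^ i) * Y := by rw [mul_pow]; ring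
        _ ≤ 2 ^ J * M * K * (z ^ (J - (i + 1)) * z ^ i) * Y := by
            gcongr <;> first | norm_num | omega
        _ = _ := by rw [← pow_add, show J - (i + 1) + i = J - 1 by omega]
    refine (Finset.sum_le_sum this).trans ?_
    simp
  have hm' : |((z + 2).choose J : ℝ) * K - K * ((z : ℝ) ^ J / (J.factorial : ℝ))| ≤ (J + 2) * J * 2 ^ J * (z : ℝ) ^ (J - 1) * K * Y := by
    rw [mul_comm, ← mul_sub, abs_mul, abs_of_nonneg hK]
    calc _ ≤ K * ((J + 2) * J * 2 ^ J * (z : ℝ) ^ (J - 1)) := by gcongr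
      _ = (J + 2) * J * 2 ^ J * (z : ℝ) ^ (J - 1) * K * 1 := by ring
      _ ≤ _ := by gcongr
  rw [add_sub_assoc]
  refine (abs_add_le _ _).trans ((add_le_add hrest hm').trans (le_of_eq ?_))
  ring

lemma pascal_series (a j : ℕ) (h : a.choose (j + 1) = 0) :
    (1 - PowerSeries.X) * PowerSeries.mk (fun n => ((n + a + 1).choose (j + 1) : ℝ)) =
      PowerSeries.mk (fun n => ((n + a).choose j : ℝ)) := by
  ext n
  rw [sub_mul, one_mul, map_sub]
  cases n with
  | zero =>
    simp only [PowerSeries.coeff_mk, PowerSeries.coeff_zero_X_mul, sub_zero, zero_add]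
    rw [Nat.choose_succ_succ, h]; simp
  | succ n =>
    simp only [PowerSeries.coeff_mk, PowerSeries.coeff_succ_X_mul]
    rw [show n + 1 + a + 1 = (n + a + 1) + 1 by ring, show n + 1 + a = n + a + 1 by ring, Nat.choose_succ_succ (n + a + 1)]
    push_cast; ring

lemma conv_id (b : ℕ → ℝ) (K : PowerSeries ℝ) (h : (1 - PowerSeries.X) ^ 2 * PowerSeries.mk b = K) (z j : ℕ) :
    ∑ n ∈ Finset.range (z + 1), b n * ((z - n).choose j : ℝ) =
      ∑ n ∈ Finset.range (z + 2 + 1), PowerSeries.coeff n K * ((z + 2 - n).choose (j + 2) : ℝ) := by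
  have e1 := pascal_series 0 j (by simp)
  have e2 := pascal_series 1 (j + 1) (by rw [Nat.choose_eq_zero_of_lt]; omega)
  simp only [add_zero] at e1
  have e : PowerSeries.mk b * PowerSeries.mk (fun n => (n.choose j : ℝ)) =
      K * PowerSeries.mk (fun n => ((n + 1 + 1).choose (j + 1 + 1) : ℝ)) := by
    rw [← e1, ← e2, ← h]; ring
  have := congrArg (PowerSeries.coeff z) e
  rw [PowerSeries.coeff_mul, PowerSeries.coeff_mul, Finset.Nat.sum_antidiagonal_eq_sum_range_succ_mk,
    Finset.Nat.sum_antidiagonal_eq_sum_range_succ_mk] at this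
  simp only [PowerSeries.coeff_mk] at this
  rw [this, Finset.sum_range_succ _ (z + 2), Finset.sum_range_succ _ (z + 1)]
  rw [Nat.choose_eq_zero_of_lt (show z + 2 - (z + 1) < j + 2 by omega),
    Nat.choose_eq_zero_of_lt (show z + 2 - (z + 2) < j + 2 by omega)]
  simp only [Nat.cast_zero, mul_zero, add_zero]
  refine Finset.sum_congr rfl fun n hn => ?_
  have : n ≤ z := by simpa [Nat.lt_succ_iff] using hn
  rw [show z - n + 1 + 1 = z + 2 - n by omega]

end PartD
section PartE

lemma kappa_zero {r : ℝ} (hr : 1 ≤ r) {A : PowerSeries ℝ} {N : ℝ} {φ : ℂ → ℂ} (h : Good r A N φ) {x : ℝ}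
    (hx : φ 1 = (x : ℂ)) : ∑' n, PowerSeries.coeff n A * (n.choose 0 : ℝ) = x := by
  have h1 := h.2.2 1 (by simpa using hr)
  rw [hx] at h1
  simp only [one_pow, mul_one] at h1
  simp only [Nat.choose_zero_right, Nat.cast_one, mul_one]
  exact (Complex.hasSum_ofReal.1 h1).tsum_eq

lemma log_facts {D z Y : ℕ} (hD : 32 ≤ D) (hz : D ≤ 2 * z) (hY : Y = 2 * Nat.log 2 D + 2) :
    1 ≤ Real.log D ∧ (Y : ℝ) ≤ 6 * Real.log D ∧ Y ≤ z := by
  have hDr : (32 : ℝ) ≤ D := by exact_mod_cast hD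
  have h1 : 1 ≤ Real.log D := by
    rw [Real.le_log_iff_exp_le (by linarith)]
    linarith [Real.exp_one_lt_d9]
  set L := Nat.log 2 D with hL
  have hpow : 2 ^ L ≤ D := Nat.pow_log_le_self 2 (by omega)
  have hL5 : 5 ≤ L := by
    rw [hL]; exact Nat.le_log_of_pow_le (by norm_num) (by omega)
  refine ⟨h1, ?_, ?_⟩
  · have : (L : ℝ) * Real.log 2 ≤ Real.log D := by
      rw [← Real.log_pow]
      apply Real.log_le_log (by positivity)
      exact_mod_cast hpow
    have h2 := Real.log_two_gt_d9
    rw [hY]; push_cast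
    have hL0 : (0 : ℝ) ≤ L := by positivity
    nlinarith
  · have : ∀ m, 5 ≤ m → 4 * m + 4 ≤ 2 ^ m := by
      intro m hm
      induction m, hm using Nat.le_induction with
      | base => norm_num
      | succ m hm ih => rw [pow_succ]; omega
    have := this L hL5
    omega

set_option maxHeartbeats 1000000 in
theorem analytic_core (q : ℕ) (hq : 2 ≤ q) (j : ℕ) : ∃ C : ℝ, 0 < C ∧
    ∀ (ι : Type) (S : Finset ι) (d : ι → ℕ) (σ : ι → ℝ) (b : ℕ → ℝ) (D z : ℕ),
      (∀ i ∈ S, 1 ≤ d i) → (∀ i ∈ S, σ i = -1 ∨ σ i = 0) → ∑ i ∈ S, d i ≤ 2 * D →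
      (∀ e, e * (S.filter (fun i => d i = e)).card ≤ q ^ e) →
      ((∏ i ∈ S, (1 + PowerSeries.C (((q : ℝ)⁻¹) ^ d i) * PowerSeries.X ^ d i)) *
          ((1 - PowerSeries.X) ^ 2 * PowerSeries.mk b) =
        (∏ i ∈ S, (1 + PowerSeries.C (σ i * ((q : ℝ)⁻¹) ^ d i) * PowerSeries.X ^ d i)) *
          (1 + PowerSeries.C (-(q : ℝ)⁻¹) * PowerSeries.X ^ 2)) →
      32 ≤ D → D ≤ 2 * z → 
      |∑ n ∈ Finset.range (z + 1), b n * ((z - n).choose j : ℝ) -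
        ((1 - (q : ℝ)⁻¹) * ∏ i ∈ S, (1 + σ i * ((q : ℝ)⁻¹) ^ d i) / (1 + ((q : ℝ)⁻¹) ^ d i)) *
          ((z : ℝ) ^ (j + 2) / ((j + 2).factorial : ℝ))| ≤
      C * ((1 - (q : ℝ)⁻¹) * ∏ i ∈ S, (1 + σ i * ((q : ℝ)⁻¹) ^ d i) / (1 + ((q : ℝ)⁻¹) ^ d i)) *
        (z : ℝ) ^ (j + 1) * Real.log D := by
  have hq2 : (2 : ℝ) ≤ q := by exact_mod_cast hq
  have hqp : (0 : ℝ) < q := by linarith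
  have hqi : (q : ℝ)⁻¹ ≤ 1 / 2 := by rw [one_div]; exact inv_anti₀ (by norm_num) hq2
  have hqi0 : 0 < (q : ℝ)⁻¹ := by positivity
  obtain ⟨r, hr0, hrq⟩ : ∃ r : ℝ, 0 < r ∧ r ^ 2 = q :=
    ⟨Real.sqrt q, Real.sqrt_pos.2 hqp, Real.sq_sqrt hqp.le⟩
  have hr1 : 5 / 4 < r := by nlinarith
  obtain ⟨s, hs0, hsr⟩ : ∃ s : ℝ, 0 < s ∧ s ^ 2 = r :=
    ⟨Real.sqrt r, Real.sqrt_pos.2 hr0, Real.sq_sqrt hr0.le⟩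
  have hs1 : 1 < s := by nlinarith
  have hlogs : 0 < Real.log s := Real.log_pos hs1
  obtain ⟨A, hA⟩ := sumY q (r := r) (η := Real.log s / 16) (by linarith) (by positivity)
  obtain ⟨B, hB0, hB⟩ := core_tail (j + 2) hs1 hsr
  set M : ℝ := 4 * Real.exp 20 with hMdef
  have hM0 : 0 < M := by positivity
  set C1 : ℝ := (((j + 2 : ℕ) : ℝ) + 2) * ((j + 2 : ℕ) : ℝ) * 2 ^ (j + 2) + ((j + 2 : ℕ) : ℝ) * 2 ^ (j + 2) * M with hC1
  have hC10 : 0 ≤ C1 := by positivity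
  refine ⟨C1 * 6 + 4 * B * Real.exp (8 * A), by positivity, ?_⟩
  intro ι S d σ b D z hd hσ hsum hcount hid hD hDz
  set K1 : ℝ := (1 - (q : ℝ)⁻¹) * ∏ i ∈ S, (1 + σ i * ((q : ℝ)⁻¹) ^ d i) / (1 + ((q : ℝ)⁻¹) ^ d i) with hK1
  obtain ⟨Y, hY⟩ : ∃ Y, Y = 2 * Nat.log 2 D + 2 := ⟨_, rfl⟩
  obtain ⟨hlog1, hYlog, hYz⟩ := log_facts hD hDz hY
  have hY4 : 4 ≤ Y := by
    have : 1 ≤ Nat.log 2 D := Nat.log_pos (by norm_num) (by omega)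
    omega
  have hY4r : (4 : ℝ) ≤ Y := by exact_mod_cast hY4
  obtain ⟨ρ, hρ⟩ : ∃ ρ : ℝ, ρ = 1 / (Y : ℝ) := ⟨_, rfl⟩
  have hρ0 : 0 < ρ := by rw [hρ]; positivity
  have hρ4 : ρ ≤ 1 / 4 := by rw [hρ]; exact one_div_le_one_div_of_le (by norm_num) hY4r
  have hsm := small_sum hq S d D (by omega) hd hsum hcount Y hY ρ hρ
  have hSig := hA ι S d D hd hsum hcount
  set SG : ℝ := ∑ i ∈ S, (r⁻¹) ^ (d i) with hSG
  have hyr : (q : ℝ)⁻¹ * r < 1 := by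
    rw [← hrq]
    have : (r ^ 2)⁻¹ * r = r⁻¹ := by field_simp
    rw [this]; exact inv_lt_one_of_one_lt₀ (by linarith)
  -- the power series
  set KS : PowerSeries ℝ := (1 + PowerSeries.C (-(q : ℝ)⁻¹) * PowerSeries.X ^ 2) *
    ∏ i ∈ S, ((1 + PowerSeries.C (σ i * ((q : ℝ)⁻¹) ^ d i) * PowerSeries.X ^ d i) * geo (q : ℝ)⁻¹ (d i)) with hKS
  have hgood := (Good.binom hr0.le (-(q : ℝ)⁻¹) 2).mul hr0.le (Good.prod hr0.le S (fun i hi =>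
    (Good.binom hr0.le (σ i * ((q : ℝ)⁻¹) ^ d i) (d i)).mul hr0.le (Good.geo hr0.le hqi0.le (hd i hi) hyr)))
  rw [← hKS] at hgood
  have hKb : (1 - PowerSeries.X) ^ 2 * PowerSeries.mk b = KS := by
    have hg : (∏ i ∈ S, (1 + PowerSeries.C (((q : ℝ)⁻¹) ^ d i) * PowerSeries.X ^ d i)) * ∏ i ∈ S, geo (q : ℝ)⁻¹ (d i) = 1 := by
      rw [← Finset.prod_mul_distrib]
      exact Finset.prod_eq_one fun i hi => geo_mul _ (hd i hi)
    rw [hKS, Finset.prod_mul_distrib]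
    calc _ = ((∏ i ∈ S, (1 + PowerSeries.C (((q : ℝ)⁻¹) ^ d i) * PowerSeries.X ^ d i)) * ∏ i ∈ S, geo (q : ℝ)⁻¹ (d i)) * ((1 - PowerSeries.X) ^ 2 * PowerSeries.mk b) := by rw [hg, one_mul]
      _ = (∏ i ∈ S, geo (q : ℝ)⁻¹ (d i)) * ((∏ i ∈ S, (1 + PowerSeries.C (((q : ℝ)⁻¹) ^ d i) * PowerSeries.X ^ d i)) * ((1 - PowerSeries.X) ^ 2 * PowerSeries.mk b)) := by ring
      _ = _ := by rw [hid]; ring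
  -- positivity of K1
  have hfac : ∀ i ∈ S, 0 ≤ (1 + σ i * ((q : ℝ)⁻¹) ^ d i) / (1 + ((q : ℝ)⁻¹) ^ d i) := fun i hi =>
    (Real.exp_pos _).le.trans (local_norm hq hr0 hrq (hd i hi) (hσ i hi)).2
  have hprodlow : Real.exp (-(3 * SG)) ≤ ∏ i ∈ S, (1 + σ i * ((q : ℝ)⁻¹) ^ d i) / (1 + ((q : ℝ)⁻¹) ^ d i) := by
    rw [hSG, Finset.mul_sum, ← Finset.sum_neg_distrib, Real.exp_sum]
    exact Finset.prod_le_prod (fun _ _ => (Real.exp_pos _).le) fun i hi =>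
      (local_norm hq hr0 hrq (hd i hi) (hσ i hi)).2
  have hK1low : 1 / 2 * Real.exp (-(3 * SG)) ≤ K1 := by
    rw [hK1]; gcongr <;> linarith
  have hK10 : 0 < K1 := lt_of_lt_of_le (by positivity) hK1low
  -- norm bound
  obtain ⟨gs, gN, gf'⟩ := hgood
  have hN : (∑' n, |PowerSeries.coeff n KS| * r ^ n) ≤ 2 * Real.exp (5 * SG) := by
    refine gN.trans ?_
    have h2 : 1 + |-(q : ℝ)⁻¹| * r ^ 2 = 2 := by
      rw [abs_neg, abs_of_pos hqi0, hrq, inv_mul_cancel₀ hqp.ne']; norm_num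
    rw [h2]
    gcongr
    rw [hSG, Finset.mul_sum, Real.exp_sum]
    refine Finset.prod_le_prod (fun i hi => ?_) fun i hi => (local_norm hq hr0 hrq (hd i hi) (hσ i hi)).1
    have : ((q : ℝ)⁻¹ * r) ^ d i < 1 := pow_lt_one₀ (by positivity) hyr (by have := hd i hi; omega)
    have h3 : 0 ≤ (1 - ((q : ℝ)⁻¹ * r) ^ d i)⁻¹ := inv_nonneg.2 (by linarith)
    positivity
  -- Cauchy bounds
  have hcirc : ∀ t : ℂ, ‖t‖ = ρ → ‖(1 + ((-(q : ℝ)⁻¹ : ℝ) : ℂ) * (1 + t) ^ 2) *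
      ∏ i ∈ S, ((1 + ((σ i * ((q : ℝ)⁻¹) ^ d i : ℝ) : ℂ) * (1 + t) ^ d i) * (1 + (((q : ℝ)⁻¹ : ℝ) * (1 + t)) ^ d i)⁻¹)‖ ≤ M * K1 := by
    intro t ht
    rw [norm_mul, norm_prod]
    have hp : ∏ i ∈ S, ‖(1 + ((σ i * ((q : ℝ)⁻¹) ^ d i : ℝ) : ℂ) * (1 + t) ^ d i) * (1 + (((q : ℝ)⁻¹ : ℝ) * (1 + t)) ^ d i)⁻¹‖ ≤
        (∏ i ∈ S, (1 + σ i * ((q : ℝ)⁻¹) ^ d i) / (1 + ((q : ℝ)⁻¹) ^ d i)) * Real.exp 20 := by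
      calc _ ≤ ∏ i ∈ S, ((1 + σ i * ((q : ℝ)⁻¹) ^ d i) / (1 + ((q : ℝ)⁻¹) ^ d i) *
            Real.exp (4 * (((q : ℝ)⁻¹) ^ d i * ((1 + ρ) ^ d i - 1)))) :=
            Finset.prod_le_prod (fun _ _ => norm_nonneg _) fun i hi => local_bound hq ht hρ4 (hd i hi) (hσ i hi)
        _ ≤ _ := by
            rw [Finset.prod_mul_distrib, ← Real.exp_sum, ← Finset.mul_sum]
            have := Finset.prod_nonneg hfac
            gcongr
            linarith
    have h1 : ‖(1 + ((-(q : ℝ)⁻¹ : ℝ) : ℂ) * (1 + t) ^ 2)‖ ≤ 4 * (1 - (q : ℝ)⁻¹) := by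
      have h1t : ‖1 + t‖ ≤ 5 / 4 := (norm_add_le _ _).trans (by rw [norm_one, ht]; linarith)
      calc _ ≤ ‖(1 : ℂ)‖ + ‖((-(q : ℝ)⁻¹ : ℝ) : ℂ) * (1 + t) ^ 2‖ := norm_add_le _ _
        _ = 1 + (q : ℝ)⁻¹ * ‖1 + t‖ ^ 2 := by
            rw [norm_one, norm_mul, Complex.norm_real, Real.norm_eq_abs, abs_neg, abs_of_pos hqi0, norm_pow]
        _ ≤ 1 + 1 / 2 * (5 / 4) ^ 2 := by gcongr
        _ ≤ _ := by linarith
    calc _ ≤ (4 * (1 - (q : ℝ)⁻¹)) * ((∏ i ∈ S, (1 + σ i * ((q : ℝ)⁻¹) ^ d i) / (1 + ((q : ℝ)⁻¹) ^ d i)) * Real.exp 20) := by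
          have : 0 ≤ 1 - (q : ℝ)⁻¹ := by linarith
          gcongr
      _ = _ := by rw [hMdef, hK1]; ring
  have htc := taylor_cauchy (c := fun n => PowerSeries.coeff n KS) hρ0 (by linarith) gs gf' hcirc
  have hκ0 : ∑' n, PowerSeries.coeff n KS * (n.choose 0 : ℝ) = K1 := by
    refine kappa_zero (r := r) (by linarith) ⟨gs, gN, gf'⟩ ?_
    rw [hK1]; push_cast
    simp only [one_pow, mul_one, div_eq_mul_inv]
    ring
  have has := assemble (j + 2) (by omega) M hM0.le (fun i => ∑' n, PowerSeries.coeff n KS * (n.choose i : ℝ)) K1 Y z hK10.le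
    (by linarith) (by exact_mod_cast hYz) (by omega) hκ0 (fun i => by
      refine (htc i).2.trans (le_of_eq ?_)
      rw [hρ, div_pow, one_pow]; field_simp)
  have hbt := hB (fun n => PowerSeries.coeff n KS) (z + 2) (2 * Real.exp (5 * SG)) gs hN (fun i => (htc i).1)
  have hbt2 : B * (2 * Real.exp (5 * SG)) / s ^ (z + 2) ≤ 4 * B * Real.exp (8 * A) * K1 := by
    rw [div_le_iff₀ (by positivity)]
    have h1 : Real.exp (8 * SG) ≤ Real.exp (8 * A) * s ^ (z + 2) := by
      have : s ^ (z + 2) = Real.exp (Real.log s * ((z : ℝ) + 2)) := by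
        rw [← Real.rpow_natCast, Real.rpow_def_of_pos hs0]; push_cast; rfl
      rw [this, ← Real.exp_add]
      apply Real.exp_le_exp.2
      have hDz' : (D : ℝ) ≤ 2 * z := by exact_mod_cast hDz
      nlinarith
    calc B * (2 * Real.exp (5 * SG)) = 4 * B * Real.exp (8 * SG) * (1 / 2 * Real.exp (-(3 * SG))) := by
          rw [show (5 : ℝ) * SG = 8 * SG + -(3 * SG) by ring, Real.exp_add]; ring
      _ ≤ 4 * B * (Real.exp (8 * A) * s ^ (z + 2)) * K1 := by gcongr
      _ = _ := by ring
  rw [conv_id b KS hKb z j]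
  have htri := (abs_sub_le _ _ _).trans (add_le_add (hbt.trans hbt2) has)
  refine htri.trans ?_
  have hz1 : (1 : ℝ) ≤ (z : ℝ) ^ (j + 1) := one_le_pow₀ (by
    have : 1 ≤ z := by omega
    exact_mod_cast this)
  have hzl : 1 ≤ (z : ℝ) ^ (j + 1) * Real.log D := by nlinarith
  simp only [show j + 2 - 1 = j + 1 by omega]
  calc _ ≤ 4 * B * Real.exp (8 * A) * K1 * ((z : ℝ) ^ (j + 1) * Real.log D) + C1 * K1 * (z : ℝ) ^ (j + 1) * (6 * Real.log D) := by
        apply add_le_add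
        · exact le_mul_of_one_le_right (by positivity) hzl
        · gcongr
    _ = _ := by ring

end PartE
section PartF

lemma pow_as_choose (k : ℕ) : ∃ α : ℕ → ℝ, α k = (k.factorial : ℝ) ∧
    ∀ m : ℕ, (m : ℝ) ^ k = ∑ j ∈ Finset.range (k + 1), α j * (m.choose j : ℝ) := by
  induction k with
  | zero => exact ⟨fun _ => 1, by simp, by simp⟩
  | succ k ih =>
    obtain ⟨α, h1, h2⟩ := ih
    refine ⟨fun j => j * α (j - 1) + (if j ≤ k then j * α j else 0), ?_, ?_⟩
    · simp [h1, Nat.factorial_succ]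
    · intro m
      have hstep : ∀ j : ℕ, (m : ℝ) * (m.choose j : ℝ) = (j + 1) * (m.choose (j + 1) : ℝ) + j * (m.choose j : ℝ) := by
        intro j
        rcases lt_or_ge m j with h | h
        · rw [Nat.choose_eq_zero_of_lt h, Nat.choose_eq_zero_of_lt (by omega : m < j + 1)]; simp
        · have := Nat.choose_succ_right_eq m j
          have h' : ((m.choose (j + 1) : ℕ) : ℝ) * ((j : ℝ) + 1) = (m.choose j : ℝ) * ((m : ℝ) - j) := by
            rw [← Nat.cast_sub h]; exact_mod_cast this
          linarith
      rw [pow_succ, h2 m, Finset.sum_mul]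
      simp only [add_mul]
      rw [Finset.sum_add_distrib, Finset.sum_range_succ' _ (k + 1), Finset.sum_range_succ _ (k + 1)]
      have e2 : ∑ j ∈ Finset.range (k + 1), (if j ≤ k then (j : ℝ) * α j else 0) * (m.choose j : ℝ) =
          ∑ j ∈ Finset.range (k + 1), (j : ℝ) * α j * (m.choose j : ℝ) := by
        refine Finset.sum_congr rfl fun j hj => ?_
        rw [if_pos (by simpa [Nat.lt_succ_iff] using hj)]
      rw [e2]
      simp only [Nat.cast_zero, zero_mul, add_zero, Nat.add_sub_cancel,
        if_neg (show ¬ k + 1 ≤ k by omega)]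
      rw [← Finset.sum_add_distrib]
      refine Finset.sum_congr rfl fun j _ => ?_
      have := hstep j
      push_cast
      linear_combination α j * this

theorem power_core (q : ℕ) (hq : 2 ≤ q) (k : ℕ) : ∃ C : ℝ, 0 < C ∧
    ∀ (ι : Type) (S : Finset ι) (d : ι → ℕ) (σ : ι → ℝ) (b : ℕ → ℝ) (D z : ℕ),
      (∀ i ∈ S, 1 ≤ d i) → (∀ i ∈ S, σ i = -1 ∨ σ i = 0) → ∑ i ∈ S, d i ≤ 2 * D →
      (∀ e, e * (S.filter (fun i => d i = e)).card ≤ q ^ e) →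
      ((∏ i ∈ S, (1 + PowerSeries.C (((q : ℝ)⁻¹) ^ d i) * PowerSeries.X ^ d i)) *
          ((1 - PowerSeries.X) ^ 2 * PowerSeries.mk b) =
        (∏ i ∈ S, (1 + PowerSeries.C (σ i * ((q : ℝ)⁻¹) ^ d i) * PowerSeries.X ^ d i)) *
          (1 + PowerSeries.C (-(q : ℝ)⁻¹) * PowerSeries.X ^ 2)) →
      32 ≤ D → D ≤ 2 * z → 
      |∑ n ∈ Finset.range (z + 1), b n * ((z : ℝ) - (n : ℝ)) ^ k -
        ((1 - (q : ℝ)⁻¹) * ∏ i ∈ S, (1 + σ i * ((q : ℝ)⁻¹) ^ d i) / (1 + ((q : ℝ)⁻¹) ^ d i)) *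
          ((z : ℝ) ^ (k + 2) / (((k : ℝ) + 2) * ((k : ℝ) + 1)))| ≤
      C * ((1 - (q : ℝ)⁻¹) * ∏ i ∈ S, (1 + σ i * ((q : ℝ)⁻¹) ^ d i) / (1 + ((q : ℝ)⁻¹) ^ d i)) *
        (z : ℝ) ^ (k + 1) * Real.log D := by
  obtain ⟨α, hαk, hα⟩ := pow_as_choose k
  choose Cj hCj0 hCj using analytic_core q hq
  refine ⟨∑ j ∈ Finset.range (k + 1), |α j| * (Cj j + 1) + 1,
    add_pos_of_nonneg_of_pos (Finset.sum_nonneg fun j _ => by have := hCj0 j; positivity) one_pos, ?_⟩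
  intro ι S d σ b D z hd hσ hsum hcount hid hD hDz
  have hall := fun j => hCj j ι S d σ b D z hd hσ hsum hcount hid hD hDz
  have hq2 : (2 : ℝ) ≤ q := by exact_mod_cast hq
  have hqi : (q : ℝ)⁻¹ ≤ 1 / 2 := by rw [one_div]; exact inv_anti₀ (by norm_num) hq2
  have hqi0 : 0 < (q : ℝ)⁻¹ := by positivity
  have hK0 : 0 ≤ (1 - (q : ℝ)⁻¹) * ∏ i ∈ S, (1 + σ i * ((q : ℝ)⁻¹) ^ d i) / (1 + ((q : ℝ)⁻¹) ^ d i) := by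
    refine mul_nonneg (by linarith) (Finset.prod_nonneg fun i hi => div_nonneg ?_ (by positivity))
    have : ((q : ℝ)⁻¹) ^ d i ≤ 1 := pow_le_one₀ hqi0.le (by linarith)
    rcases hσ i hi with h | h <;> rw [h] <;> linarith
  set K := (1 - (q : ℝ)⁻¹) * ∏ i ∈ S, (1 + σ i * ((q : ℝ)⁻¹) ^ d i) / (1 + ((q : ℝ)⁻¹) ^ d i) with hK
  clear_value K
  obtain ⟨hlog1, -, -⟩ := log_facts hD hDz rfl
  have hz1 : (1 : ℝ) ≤ z := by
    have : 1 ≤ z := by omega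
    exact_mod_cast this
  have hsumeq : ∑ n ∈ Finset.range (z + 1), b n * ((z : ℝ) - (n : ℝ)) ^ k =
      ∑ j ∈ Finset.range (k + 1), α j * ∑ n ∈ Finset.range (z + 1), b n * ((z - n).choose j : ℝ) := by
    simp_rw [Finset.mul_sum]
    rw [Finset.sum_comm]
    refine Finset.sum_congr rfl fun n hn => ?_
    have hn' : n ≤ z := by simpa [Nat.lt_succ_iff] using hn
    rw [← Nat.cast_sub hn', hα, Finset.mul_sum]
    exact Finset.sum_congr rfl fun j _ => by ring
  have hmain : K * ((z : ℝ) ^ (k + 2) / (((k : ℝ) + 2) * ((k : ℝ) + 1))) =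
      α k * (K * ((z : ℝ) ^ (k + 2) / ((k + 2).factorial : ℝ))) := by
    rw [hαk, Nat.factorial_succ, Nat.factorial_succ]
    have : (k.factorial : ℝ) ≠ 0 := by exact_mod_cast Nat.factorial_ne_zero k
    push_cast
    field_simp
    ring
  have hdec : ∑ n ∈ Finset.range (z + 1), b n * ((z : ℝ) - (n : ℝ)) ^ k - K * ((z : ℝ) ^ (k + 2) / (((k : ℝ) + 2) * ((k : ℝ) + 1)))
      = ∑ j ∈ Finset.range (k + 1), α j * (∑ n ∈ Finset.range (z + 1), b n * ((z - n).choose j : ℝ) - K * ((z : ℝ) ^ (j + 2) / ((j + 2).factorial : ℝ)))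
        + ∑ j ∈ Finset.range k, α j * (K * ((z : ℝ) ^ (j + 2) / ((j + 2).factorial : ℝ))) := by
    rw [hsumeq, hmain]
    simp only [mul_sub, Finset.sum_sub_distrib]
    rw [Finset.sum_range_succ (fun j => α j * (K * ((z : ℝ) ^ (j + 2) / ((j + 2).factorial : ℝ))))]
    ring
  rw [hdec]
  have hW : 0 ≤ K * (z : ℝ) ^ (k + 1) * Real.log D := by positivity
  have b1 : |∑ j ∈ Finset.range (k + 1), α j * (∑ n ∈ Finset.range (z + 1), b n * ((z - n).choose j : ℝ) - K * ((z : ℝ) ^ (j + 2) / ((j + 2).factorial : ℝ)))|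
      ≤ ∑ j ∈ Finset.range (k + 1), |α j| * Cj j * (K * (z : ℝ) ^ (k + 1) * Real.log D) := by
    refine (Finset.abs_sum_le_sum_abs _ _).trans (Finset.sum_le_sum fun j hj => ?_)
    have hj' : j ≤ k := by simpa [Nat.lt_succ_iff] using hj
    have hc := hCj0 j
    rw [abs_mul, mul_assoc]
    gcongr
    refine (hall j).trans ?_
    calc _ ≤ Cj j * K * (z : ℝ) ^ (k + 1) * Real.log D := by gcongr
      _ = _ := by ring
  have b2 : |∑ j ∈ Finset.range k, α j * (K * ((z : ℝ) ^ (j + 2) / ((j + 2).factorial : ℝ)))| ≤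
      ∑ j ∈ Finset.range (k + 1), |α j| * (K * (z : ℝ) ^ (k + 1) * Real.log D) := by
    refine (Finset.abs_sum_le_sum_abs _ _).trans ?_
    rw [Finset.sum_range_succ]
    refine le_add_of_le_of_nonneg (Finset.sum_le_sum fun j hj => ?_) (by positivity)
    have hj' : j < k := by simpa using hj
    rw [abs_mul]
    gcongr
    have hf : (1 : ℝ) ≤ ((j + 2).factorial : ℝ) := by exact_mod_cast Nat.succ_le_of_lt (Nat.factorial_pos _)
    rw [abs_of_nonneg (by positivity)]
    calc _ ≤ K * (z : ℝ) ^ (j + 2) := by gcongr; exact div_le_self (by positivity) hf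
      _ ≤ K * (z : ℝ) ^ (k + 1) :=
          mul_le_mul_of_nonneg_left (pow_le_pow_right₀ hz1 (by omega)) hK0
      _ ≤ _ := le_mul_of_one_le_right (by positivity) hlog1
  refine (abs_add_le _ _).trans ((add_le_add b1 b2).trans ?_)
  rw [← Finset.sum_add_distrib]
  have : ∑ j ∈ Finset.range (k + 1), (|α j| * Cj j * (K * (z : ℝ) ^ (k + 1) * Real.log D) + |α j| * (K * (z : ℝ) ^ (k + 1) * Real.log D))
      = (∑ j ∈ Finset.range (k + 1), |α j| * (Cj j + 1)) * (K * (z : ℝ) ^ (k + 1) * Real.log D) := by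
    rw [Finset.sum_mul]; exact Finset.sum_congr rfl fun j _ => by ring
  rw [this]
  calc _ ≤ (∑ j ∈ Finset.range (k + 1), |α j| * (Cj j + 1)) * (K * (z : ℝ) ^ (k + 1) * Real.log D) + 1 * (K * (z : ℝ) ^ (k + 1) * Real.log D) := by linarith
    _ = _ := by ring

end PartF
section PartG
open Classical

/-- The local weights at the primes. -/
def tauMR (M R : Polynomial Fq) (P : Polynomial Fq) : ℝ :=
  if P ∈ pf R then 0 else if P ∈ pf M then 1 else 2

lemma pf_MR {M R : Polynomial Fq} (hM : M.Monic) (hR : R.Monic) (P : Polynomial Fq) :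
    P ∈ pf (M * R) ↔ P ∈ pf M ∨ P ∈ pf R := by
  rw [mem_pf (hM.mul hR).ne_zero, mem_pf hM.ne_zero, mem_pf hR.ne_zero]
  constructor
  · rintro ⟨h1, h2⟩
    exact (h1.2.prime.dvd_or_dvd h2).imp (fun h => ⟨h1, h⟩) (fun h => ⟨h1, h⟩)
  · rintro (⟨h1, h2⟩ | ⟨h1, h2⟩)
    · exact ⟨h1, h2.mul_right _⟩
    · exact ⟨h1, h2.mul_left _⟩

lemma rescaled_identity {M R : Polynomial Fq} (hM : M.Monic) (hR : R.Monic) (q : ℕ) (hq : q = Fintype.card Fq) :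
    (∏ P ∈ pf (M * R), (1 + PowerSeries.C (((q : ℝ)⁻¹) ^ P.natDegree) * PowerSeries.X ^ P.natDegree)) *
        ((1 - PowerSeries.X) ^ 2 * PowerSeries.mk (fun n => ((q : ℝ)⁻¹) ^ n * ∑ N ∈ monics Fq n, wt (tauMR M R) N)) =
      (∏ P ∈ pf (M * R), (1 + PowerSeries.C ((tauMR M R P - 1) * ((q : ℝ)⁻¹) ^ P.natDegree) * PowerSeries.X ^ P.natDegree)) *
        (1 + PowerSeries.C (-(q : ℝ)⁻¹) * PowerSeries.X ^ 2) := by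
  have hq0 : (q : ℝ) ≠ 0 := by
    rw [hq]; exact_mod_cast Fintype.card_ne_zero
  have h1 := gf_ratio (pf (M * R)) (fun P hP => ((mem_pf (hM.mul hR).ne_zero).1 hP).1) (tauMR M R) (by
    intro P hP
    rw [pf_MR hM hR, not_or] at hP
    simp [tauMR, hP.1, hP.2])
  have h2 := gf_two (Fq := Fq)
  rw [← hq] at h2
  have h3 : (∏ P ∈ pf (M * R), (1 + PowerSeries.X ^ P.natDegree)) *
      ((1 - PowerSeries.C (q : ℝ) * PowerSeries.X) ^ 2 * gf (wt (tauMR M R))) =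
      (∏ P ∈ pf (M * R), (1 + PowerSeries.C (tauMR M R P - 1) * PowerSeries.X ^ P.natDegree)) *
        (1 - PowerSeries.C (q : ℝ) * PowerSeries.X ^ 2) := by
    rw [← h2]
    linear_combination (1 - PowerSeries.C (q : ℝ) * PowerSeries.X) ^ 2 * h1
  have hC : ∀ c : ℝ, PowerSeries.rescale (q : ℝ)⁻¹ (PowerSeries.C c) = PowerSeries.C c := by
    intro c; ext n; rw [PowerSeries.coeff_rescale, PowerSeries.coeff_C]
    split_ifs with h <;> simp [h]
  have h4 := congrArg (PowerSeries.rescale (q : ℝ)⁻¹) h3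
  simp only [map_mul, map_prod, map_add, map_one, map_sub, map_pow, PowerSeries.rescale_X, hC, mul_pow, gf,
    PowerSeries.rescale_mk] at h4
  have e1 : (PowerSeries.C (q : ℝ) * (PowerSeries.C (q : ℝ)⁻¹ * PowerSeries.X) : PowerSeries ℝ) = PowerSeries.X := by
    rw [← mul_assoc, ← map_mul, mul_inv_cancel₀ hq0, map_one, one_mul]
  have e2 : (1 - PowerSeries.C (q : ℝ) * (PowerSeries.C (q : ℝ)⁻¹ ^ 2 * PowerSeries.X ^ 2) : PowerSeries ℝ) =
      1 + PowerSeries.C (-(q : ℝ)⁻¹) * PowerSeries.X ^ 2 := by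
    rw [← mul_assoc, ← map_pow, ← map_mul, map_neg]
    have : (q : ℝ) * (q : ℝ)⁻¹ ^ 2 = (q : ℝ)⁻¹ := by field_simp
    rw [this]; ring
  rw [e1, e2] at h4
  simp only [map_mul, map_pow, map_sub, map_one, mul_assoc] at h4 ⊢
  exact h4

lemma omegaP_eq {A : Polynomial Fq} (hA : A ≠ 0) : omegaP A = (pf A).card := by
  rw [omegaP, ← Set.ncard_coe_finset]
  congr 1
  ext P
  simp [mem_pf hA]

lemma gcdP_dvd_iff {A B P : Polynomial Fq} (hA : A ≠ 0) : (P ∣ gcdP A B ↔ P ∣ A ∧ P ∣ B) ∧ gcdP A B ≠ 0 := by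
  have hg : EuclideanDomain.gcd A B ≠ 0 := by
    intro h
    exact hA (EuclideanDomain.gcd_eq_zero_iff.1 h).1
  have hl : ((EuclideanDomain.gcd A B).leadingCoeff)⁻¹ ≠ 0 := inv_ne_zero (Polynomial.leadingCoeff_ne_zero.2 hg)
  have hu : IsUnit (Polynomial.C ((EuclideanDomain.gcd A B).leadingCoeff)⁻¹) := Polynomial.isUnit_C.2 (isUnit_iff_ne_zero.2 hl)
  constructor
  · unfold gcdP
    rw [hu.dvd_mul_left]
    exact ⟨fun h => ⟨h.trans (EuclideanDomain.gcd_dvd_left _ _), h.trans (EuclideanDomain.gcd_dvd_right _ _)⟩,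
      fun h => EuclideanDomain.dvd_gcd h.1 h.2⟩
  · unfold gcdP
    exact mul_ne_zero hu.ne_zero hg

lemma wt_tau {M R N : Polynomial Fq} (hM : M.Monic) (hR : R.Monic) (hN : N.Monic) :
    wt (tauMR M R) N = if IsCoprime N R then (2 : ℝ) ^ (omegaP N - omegaP (gcdP N M)) else 0 := by
  split_ifs with h
  · have h1 : wt (tauMR M R) N = ∏ P ∈ pf N, if P ∈ pf M then (1 : ℝ) else 2 := by
      refine Finset.prod_congr rfl fun P hP => ?_
      have hP' := (mem_pf hN.ne_zero).1 hP
      have : P ∉ pf R := by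
        intro hPR
        have hPR' := (mem_pf hR.ne_zero).1 hPR
        exact hP'.1.2.not_isUnit (h.isUnit_of_dvd' hP'.2 hPR'.2)
      simp [tauMR, this]
    have hg := fun P => gcdP_dvd_iff (A := N) (B := M) (P := P) hN.ne_zero
    have h2 : pf (gcdP N M) = (pf N).filter (fun P => P ∈ pf M) := by
      ext P
      rw [mem_pf (hg 0).2, Finset.mem_filter, mem_pf hN.ne_zero, mem_pf hM.ne_zero, (hg P).1]
      tauto
    rw [h1, omegaP_eq hN.ne_zero, omegaP_eq (hg 0).2, h2, Finset.prod_ite]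
    have := Finset.card_filter_add_card_filter_not (s := pf N) (fun P => P ∈ pf M)
    simp only [Finset.prod_const_one, one_mul, Finset.prod_const]
    congr 1
    omega
  · rw [← EuclideanDomain.gcd_isUnit_iff] at h
    obtain ⟨P, hm, hi, hd⟩ := Polynomial.exists_monic_irreducible_factor _ h
    have hPN : P ∈ pf N := (mem_pf hN.ne_zero).2 ⟨⟨hm, hi⟩, hd.trans (EuclideanDomain.gcd_dvd_left _ _)⟩
    have hPR : P ∈ pf R := (mem_pf hR.ne_zero).2 ⟨⟨hm, hi⟩, hd.trans (EuclideanDomain.gcd_dvd_right _ _)⟩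
    exact Finset.prod_eq_zero hPN (by simp [tauMR, hPR])

lemma absP_inv {A : Polynomial Fq} (hA : A ≠ 0) : (absP A)⁻¹ = ((Fintype.card Fq : ℝ)⁻¹) ^ A.natDegree := by
  rw [absP, if_neg hA, inv_pow]

lemma sum_eq {M R : Polynomial Fq} (hM : M.Monic) (hR : R.Monic) (z k : ℕ) :
    (∑ᶠ N ∈ {N : Polynomial Fq | N.Monic ∧ N.natDegree ≤ z ∧ IsCoprime N R},
          (2 : ℝ) ^ (omegaP N - omegaP (gcdP N M)) / absP N * ((z : ℝ) - (N.natDegree : ℝ)) ^ k) =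
    ∑ n ∈ Finset.range (z + 1), (((Fintype.card Fq : ℝ)⁻¹) ^ n * ∑ N ∈ monics Fq n, wt (tauMR M R) N) * ((z : ℝ) - (n : ℝ)) ^ k := by
  have hset : {N : Polynomial Fq | N.Monic ∧ N.natDegree ≤ z ∧ IsCoprime N R} =
      ↑(((Finset.range (z + 1)).biUnion (monics Fq)).filter (fun N => IsCoprime N R)) := by
    ext N
    simp only [Set.mem_ofPred_eq, Finset.coe_filter, Finset.mem_biUnion, Finset.mem_range, mem_monics]
    constructor
    · rintro ⟨h1, h2, h3⟩; exact ⟨⟨_, by omega, h1, rfl⟩, h3⟩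
    · rintro ⟨⟨n, h1, h2, h4⟩, h3⟩; exact ⟨h2, by omega, h3⟩
  rw [hset, finsum_mem_coe_finset, Finset.sum_filter, Finset.sum_biUnion]
  · refine Finset.sum_congr rfl fun n hn => ?_
    rw [Finset.mul_sum, Finset.sum_mul]
    refine Finset.sum_congr rfl fun N hN => ?_
    obtain ⟨hm, hdn⟩ := mem_monics.1 hN
    rw [wt_tau hM hR hm]
    split_ifs with h
    · rw [div_eq_mul_inv, absP_inv hm.ne_zero, hdn]; ring
    · simp
  · intro a _ b _ hab
    rw [Function.onFun, Finset.disjoint_left]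
    intro N h1 h2
    exact hab ((mem_monics.1 h1).2.symm.trans (mem_monics.1 h2).2)

lemma prod_eq {M R : Polynomial Fq} (hM : M.Monic) (hR : R.Monic) :
    (∏ᶠ P ∈ {P : Polynomial Fq | IsMonicPrime P ∧ P ∣ M * R}, ((1 - (absP P)⁻¹) / (1 + (absP P)⁻¹))) *
        ∏ᶠ P ∈ {P : Polynomial Fq | IsMonicPrime P ∧ P ∣ M ∧ ¬ P ∣ R}, (1 - (absP P)⁻¹)⁻¹ =
    ∏ P ∈ pf (M * R), (1 + (tauMR M R P - 1) * ((Fintype.card Fq : ℝ)⁻¹) ^ P.natDegree) / (1 + ((Fintype.card Fq : ℝ)⁻¹) ^ P.natDegree) := by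
  have hs1 : {P : Polynomial Fq | IsMonicPrime P ∧ P ∣ M * R} = ↑(pf (M * R)) := by
    ext P; simp [mem_pf (hM.mul hR).ne_zero]
  have hs2 : {P : Polynomial Fq | IsMonicPrime P ∧ P ∣ M ∧ ¬ P ∣ R} = ↑((pf (M * R)).filter (fun P => P ∉ pf R)) := by
    ext P
    simp only [Set.mem_ofPred_eq, Finset.coe_filter, pf_MR hM hR, mem_pf hM.ne_zero, mem_pf hR.ne_zero]
    tauto
  rw [hs1, hs2, finprod_mem_coe_finset, finprod_mem_coe_finset, Finset.prod_filter, ← Finset.prod_mul_distrib]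
  refine Finset.prod_congr rfl fun P hP => ?_
  have hP' := (mem_pf (hM.mul hR).ne_zero).1 hP
  rw [absP_inv hP'.1.1.ne_zero]
  have hx : ((Fintype.card Fq : ℝ)⁻¹) ^ P.natDegree < 1 := by
    have hc : (1 : ℝ) < Fintype.card Fq := by exact_mod_cast Fintype.one_lt_card
    have := natDegree_pos_of_prime hP'.1
    exact pow_lt_one₀ (by positivity) (inv_lt_one_of_one_lt₀ hc) (by omega)
  set x := ((Fintype.card Fq : ℝ)⁻¹) ^ P.natDegree
  have hx' : 1 - x ≠ 0 := by linarith
  by_cases h : P ∈ pf R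
  · simp only [tauMR, h, not_true, if_false, if_true]; ring
  · have hPM : P ∈ pf M := ((pf_MR hM hR P).1 hP).resolve_right h
    simp only [tauMR, h, hPM, not_false_eq_true, if_false, if_true]
    field_simp
    ring

end PartG

/-- **Weighted sum of `2^{ω(N)-ω(gcd(N,M))}`.** For `deg M ≤ deg R`, `k ≥ 0` and `z`
an integer-valued function of `R` with `z ∼ deg R`, as `deg R → ∞`,
`∑_{deg N ≤ z, (N,R)=1} 2^{ω(N)-ω((N,M))}/|N| (z - deg N)^k` equals
`(1-q⁻¹)/((k+2)(k+1)) ∏_{P ∣ MR} (1-|P|⁻¹)/(1+|P|⁻¹) ∏_{P ∣ M, P ∤ R} (1-|P|⁻¹)⁻¹ ·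
(z^{k+2} + O_k(z^{k+1} log deg R))`. -/
theorem weighted_two_omega_sum
    (Fq : Type) [Field Fq] [Fintype Fq] (k : ℕ)
    (Rseq Mseq : ℕ → Polynomial Fq) (zseq : ℕ → ℕ)
    (hRmonic : ∀ n, (Rseq n).Monic) (hMmonic : ∀ n, (Mseq n).Monic)
    (hdeg : ∀ n, (Mseq n).natDegree ≤ (Rseq n).natDegree)
    (hRtend : Filter.Tendsto (fun n => (Rseq n).natDegree) Filter.atTop Filter.atTop)
    (hz : Filter.Tendsto (fun n => (zseq n : ℝ) / ((Rseq n).natDegree : ℝ))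
      Filter.atTop (nhds 1)) :
    let main : ℕ → ℝ := fun n =>
      (1 - (Fintype.card Fq : ℝ)⁻¹) / (((k : ℝ) + 2) * ((k : ℝ) + 1)) *
        (∏ᶠ P ∈ {P : Polynomial Fq | IsMonicPrime P ∧ P ∣ Mseq n * Rseq n},
          ((1 - (absP P)⁻¹) / (1 + (absP P)⁻¹))) *
        ∏ᶠ P ∈ {P : Polynomial Fq | IsMonicPrime P ∧ P ∣ Mseq n ∧ ¬ P ∣ Rseq n},
          (1 - (absP P)⁻¹)⁻¹
    ∃ C : ℝ, 0 < C ∧ ∀ᶠ n in Filter.atTop,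
      |(∑ᶠ N ∈ {N : Polynomial Fq | N.Monic ∧ N.natDegree ≤ zseq n ∧ IsCoprime N (Rseq n)},
          (2 : ℝ) ^ (omegaP N - omegaP (gcdP N (Mseq n))) / absP N *
            ((zseq n : ℝ) - (N.natDegree : ℝ)) ^ k) -
        main n * (zseq n : ℝ) ^ (k + 2)| ≤
      C * main n * (zseq n : ℝ) ^ (k + 1) * Real.log ((Rseq n).natDegree : ℝ) := by
  obtain ⟨C, hC0, hC⟩ := power_core (Fintype.card Fq) Fintype.one_lt_card k
  intro main
  refine ⟨C * (((k : ℝ) + 2) * ((k : ℝ) + 1)), by positivity, ?_⟩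
  have hev : ∀ᶠ n in Filter.atTop, (1 / 2 : ℝ) < (zseq n : ℝ) / ((Rseq n).natDegree : ℝ) :=
    hz.eventually (lt_mem_nhds (by norm_num))
  refine (hev.and (hRtend.eventually_ge_atTop 32)).mono ?_
  rintro n ⟨h1, h2⟩
  have hM := hMmonic n
  have hR := hRmonic n
  have hMR := (hM.mul hR).ne_zero
  have hDz : (Rseq n).natDegree ≤ 2 * zseq n := by
    have hpos : (0 : ℝ) < ((Rseq n).natDegree : ℝ) := by
      have : 0 < (Rseq n).natDegree := by omega
      exact_mod_cast this
    rw [lt_div_iff₀ hpos] at h1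
    have : ((Rseq n).natDegree : ℝ) ≤ 2 * (zseq n : ℝ) := by linarith
    exact_mod_cast this
  have hS : ∀ P ∈ pf (Mseq n * Rseq n), IsMonicPrime P := fun P hP => ((mem_pf hMR).1 hP).1
  have key := hC (Polynomial Fq) (pf (Mseq n * Rseq n)) (fun P => P.natDegree)
    (fun P => tauMR (Mseq n) (Rseq n) P - 1)
    (fun m => ((Fintype.card Fq : ℝ)⁻¹) ^ m * ∑ N ∈ monics Fq m, wt (tauMR (Mseq n) (Rseq n)) N)
    (Rseq n).natDegree (zseq n)
    (fun P hP => natDegree_pos_of_prime (hS P hP))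
    (fun P hP => by
      rcases (pf_MR hM hR P).1 hP with h | h
      · by_cases h' : P ∈ pf (Rseq n) <;> simp [tauMR, h, h']
      · simp [tauMR, h])
    (by
      refine (sum_deg_pf hMR).trans ?_
      rw [Polynomial.Monic.natDegree_mul hM hR]
      have := hdeg n
      omega)
    (fun e => by convert prime_count _ hS e)
    (rescaled_identity hM hR _ rfl) h2 hDz
  have hmain : main n = (1 - (Fintype.card Fq : ℝ)⁻¹) / (((k : ℝ) + 2) * ((k : ℝ) + 1)) *
      ∏ P ∈ pf (Mseq n * Rseq n), (1 + (tauMR (Mseq n) (Rseq n) P - 1) * ((Fintype.card Fq : ℝ)⁻¹) ^ P.natDegree) /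
        (1 + ((Fintype.card Fq : ℝ)⁻¹) ^ P.natDegree) := by
    rw [← prod_eq hM hR, ← mul_assoc]
  rw [sum_eq hM hR, hmain]
  have hk2 : ((k : ℝ) + 2) ≠ 0 := by positivity
  have hk1 : ((k : ℝ) + 1) ≠ 0 := by positivity
  convert key using 1
  · congr 2
    field_simp
  · field_simp

end FFEH
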